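/- arXiv:2502.10128 — 5 statements merged into one kernel-verified Lean document; each statement's English description precedes it below -/
import Mathlib

section
/- For every consecutive pattern σ of length k−1 and the quasi-consecutive pattern p = σk, the descent polynomials satisfy the recurrence A_{n+1}^p(t) = t·∑_{i=0}^{n−1} binom(n,i)·A_i^σ(t)·A_{n−i}^p(t) + A_n^σ(t) for all n ≥ 0, where the empty sum (n = 0) is 0. -/
open scoped Classical

/-- The number of descents of a permutation of `Fin n` (one-line notation `π 0, π 1, …`). -/
def des {n : ℕ} (π : Equiv.Perm (Fin n)) : ℕ :=
  (Finset.univ.filter fun i : Fin n =>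
    ∃ h : (i : ℕ) + 1 < n, π ⟨(i : ℕ) + 1, h⟩ < π i).card

/-- `π` contains an occurrence of the consecutive pattern `σ` (a window of `m`
consecutive entries whose standardization is `σ`). -/
def ConsecOccurs {m n : ℕ} (σ : Equiv.Perm (Fin m)) (π : Equiv.Perm (Fin n)) : Prop :=
  ∃ (i : ℕ) (h : i + m ≤ n),
    ∀ a b : Fin m,
      (π ⟨i + (a : ℕ), by have := a.isLt; omega⟩ <
        π ⟨i + (b : ℕ), by have := b.isLt; omega⟩ ↔ σ a < σ b)

/-- `π` avoids the consecutive pattern `σ`. -/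
def ConsecAvoids {m n : ℕ} (σ : Equiv.Perm (Fin m)) (π : Equiv.Perm (Fin n)) : Prop :=
  ¬ ConsecOccurs σ π

/-- `π` contains an occurrence of the quasi-consecutive pattern `p = σk`, i.e. a window of
`m = k - 1` consecutive entries forming an occurrence of `σ` followed by a later entry
larger than all of them. -/
def QuasiOccurs {m n : ℕ} (σ : Equiv.Perm (Fin m)) (π : Equiv.Perm (Fin n)) : Prop :=
  ∃ (i j : ℕ) (hij : i + m ≤ j) (hj : j < n),
    (∀ a b : Fin m,
      (π ⟨i + (a : ℕ), by have := a.isLt; omega⟩ <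
        π ⟨i + (b : ℕ), by have := b.isLt; omega⟩ ↔ σ a < σ b)) ∧
    ∀ a : Fin m, π ⟨i + (a : ℕ), by have := a.isLt; omega⟩ < π ⟨j, hj⟩

/-- `π` avoids the quasi-consecutive pattern `p = σk`. -/
def QuasiAvoids {m n : ℕ} (σ : Equiv.Perm (Fin m)) (π : Equiv.Perm (Fin n)) : Prop :=
  ¬ QuasiOccurs σ π

/-- `A_n^σ(t)`, the descent polynomial of `σ`-avoiding permutations of length `n`. -/
noncomputable def AconsPoly {m : ℕ} (σ : Equiv.Perm (Fin m)) (n : ℕ) : Polynomial ℚ :=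
  ∑ π ∈ Finset.univ.filter (fun π : Equiv.Perm (Fin n) => ConsecAvoids σ π),
    Polynomial.X ^ des π

/-- `A_n^p(t)` for the quasi-consecutive pattern `p = σk`. -/
noncomputable def AquasiPoly {m : ℕ} (σ : Equiv.Perm (Fin m)) (n : ℕ) : Polynomial ℚ :=
  ∑ π ∈ Finset.univ.filter (fun π : Equiv.Perm (Fin n) => QuasiAvoids σ π),
    Polynomial.X ^ des π

/-!
Cut a permutation of length `n + 1` at its maximum, `π = L M R`. An occurrence of `p = σk` in `π`
cannot use `M` inside the window, so its window lies in `L` (and then `M` serves as the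
final large letter) or in `R`. Hence `π` avoids `p` iff `L` avoids `σ` and `R` avoids `p`, while
`des π = des L + des R`, plus one if `R` is nonempty. Summing over the set of letters of `L`, the
case of empty `R` gives the term `A_n^σ` and every other case carries the factor `t`.
-/

section Windows

variable {α : Type*} {m : ℕ}

/-- The factor of length `m` of the word `l` that starts at position `i` (counted from `0`). -/
def window (l : List α) (i : ℕ) (h : i + m ≤ l.length) (a : Fin m) : α :=
  l[i + (a : ℕ)]'(by omega)

theorem window_mem (l : List α) (i : ℕ) (h : i + m ≤ l.length) (a : Fin m) :
    window l i h a ∈ l :=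
  List.getElem_mem _

theorem window_append_left (L R : List α) (i : ℕ) (h : i + m ≤ L.length)
    (h' : i + m ≤ (L ++ R).length) : window (L ++ R) i h' = window L i h :=
  funext fun _ => List.getElem_append_left _

theorem window_append_right (L R : List α) (i : ℕ) (h : i + m ≤ R.length)
    (h' : L.length + i + m ≤ (L ++ R).length) :
    window (L ++ R) (L.length + i) h' = window R i h := by
  funext a
  simp [window, Nat.add_assoc]

theorem window_cons (x : α) (l : List α) (i : ℕ) (h : i + m ≤ l.length)
    (h' : i + 1 + m ≤ (x :: l).length) : window (x :: l) (i + 1) h' = window l i h := by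
  funext a
  simp [window, Nat.add_right_comm i 1]

theorem exists_window_append_cons_eq (L R : List α) (M : α) (i : ℕ)
    (h : i + m ≤ (L ++ M :: R).length) (hi : i ≤ L.length) (hm : L.length < i + m) :
    ∃ a, window (L ++ M :: R) i h a = M :=
  ⟨⟨L.length - i, by omega⟩, by simp [window, Nat.add_sub_cancel' hi]⟩

end Windows

section Words

variable {α : Type*} [LinearOrder α] {m n : ℕ}

/-- The word `w` has standardization `σ`. -/
def Realizes (σ : Equiv.Perm (Fin m)) (w : Fin m → α) : Prop :=
  ∀ a b, w a < w b ↔ σ a < σ b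

/-- The analogue of `ConsecOccurs` for words over an ordered alphabet. -/
def ContainsConsec (σ : Equiv.Perm (Fin m)) (l : List α) : Prop :=
  ∃ (i : ℕ) (h : i + m ≤ l.length), Realizes σ (window l i h)

/-- The analogue of `QuasiOccurs` for words over an ordered alphabet. -/
def ContainsQuasi (σ : Equiv.Perm (Fin m)) (l : List α) : Prop :=
  ∃ (i : ℕ) (h : i + m ≤ l.length), Realizes σ (window l i h) ∧
    ∃ y ∈ l.drop (i + m), ∀ a, window l i h a < y

/-- The number of descents of a word. -/
def wordDes : List α → ℕ
  | [] => 0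
  | [_] => 0
  | x :: y :: l => wordDes (y :: l) + if y < x then 1 else 0

theorem ContainsConsec.containsQuasi_append_cons {σ : Equiv.Perm (Fin m)} {L : List α}
    (hσ : ContainsConsec σ L) (R : List α) {M : α} (hL : ∀ x ∈ L, x < M) :
    ContainsQuasi σ (L ++ M :: R) := by
  obtain ⟨i, hi, hw⟩ := hσ
  have hi' : i + m ≤ (L ++ M :: R).length := by rw [List.length_append]; omega
  have hwin := window_append_left L (M :: R) i hi hi'
  refine ⟨i, hi', hwin ▸ hw, M, ?_, fun a => hwin ▸ hL _ (window_mem L i hi a)⟩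
  simp [List.drop_append_of_le_length hi]

theorem ContainsQuasi.append_left {σ : Equiv.Perm (Fin m)} {R : List α}
    (hσ : ContainsQuasi σ R) (L : List α) : ContainsQuasi σ (L ++ R) := by
  obtain ⟨i, hi, hw, y, hy, hlt⟩ := hσ
  have hi' : L.length + i + m ≤ (L ++ R).length := by rw [List.length_append]; omega
  have hwin := window_append_right L R i hi hi'
  refine ⟨L.length + i, hi', hwin ▸ hw, y, ?_, hwin ▸ hlt⟩
  rwa [Nat.add_assoc, List.drop_length_add_append]

theorem containsConsec_or_containsQuasi_of_append_cons {σ : Equiv.Perm (Fin m)} {L R : List α}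
    {M : α} (hL : ∀ x ∈ L, x ≤ M) (hR : ∀ x ∈ R, x ≤ M)
    (hσ : ContainsQuasi σ (L ++ M :: R)) : ContainsConsec σ L ∨ ContainsQuasi σ R := by
  obtain ⟨i, hi, hw, y, hy, hlt⟩ := hσ
  rcases le_or_gt (i + m) L.length with hleft | hcross
  · exact .inl ⟨i, hleft, window_append_left L (M :: R) i hleft hi ▸ hw⟩
  rcases le_or_gt i L.length with hiL | hright
  · obtain ⟨a, ha⟩ := exists_window_append_cons_eq L R M i hi hiL hcross
    have hyM : y ≤ M := by
      have hyl := List.mem_of_mem_drop hy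
      grind
    exact absurd (ha ▸ hlt a) hyM.not_gt
  · obtain ⟨c, rfl⟩ : ∃ c, i = L.length + (c + 1) := ⟨i - (L.length + 1), by omega⟩
    have hc : c + m ≤ R.length := by
      rw [List.length_append, List.length_cons] at hi
      omega
    have hc' : c + 1 + m ≤ (M :: R).length := by
      rw [List.length_cons]
      omega
    have hwin := (window_append_right L (M :: R) (c + 1) hc' hi).trans (window_cons M R c hc hc')
    rw [Nat.add_assoc, List.drop_length_add_append, Nat.add_right_comm,
      List.drop_succ_cons] at hy
    exact .inr ⟨c, hc, hwin ▸ hw, y, hy, hwin ▸ hlt⟩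

theorem containsQuasi_append_cons_iff (σ : Equiv.Perm (Fin m)) {L R : List α} {M : α}
    (hL : ∀ x ∈ L, x < M) (hR : ∀ x ∈ R, x ≤ M) :
    ContainsQuasi σ (L ++ M :: R) ↔ ContainsConsec σ L ∨ ContainsQuasi σ R := by
  refine ⟨containsConsec_or_containsQuasi_of_append_cons (fun x hx => (hL x hx).le) hR, ?_⟩
  rintro (h | h)
  · exact h.containsQuasi_append_cons R hL
  · exact (h.append_left [M]).append_left L

theorem wordDes_append_cons (R : List α) {M : α} :
    ∀ {L : List α}, (∀ x ∈ L, x ≤ M) → wordDes (L ++ M :: R) = wordDes L + wordDes (M :: R)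
  | [], _ => by simp [wordDes]
  | [x], h => by simpa [wordDes] using h
  | x :: y :: L, h => by
    have ih := wordDes_append_cons R (L := y :: L) fun z hz => h z (List.mem_cons_of_mem x hz)
    simp only [List.cons_append, wordDes] at ih ⊢
    omega

theorem wordDes_cons_of_forall_lt {R : List α} {M : α} (h : ∀ x ∈ R, x < M) (hR : R ≠ []) :
    wordDes (M :: R) = wordDes R + 1 := by
  obtain ⟨y, R, rfl⟩ := List.exists_cons_of_ne_nil hR
  rw [wordDes, if_pos (h y List.mem_cons_self)]

theorem wordDes_ofFn (f : Fin (n + 1) → α) :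
    wordDes (List.ofFn f) = ∑ i : Fin n, if f i.succ < f i.castSucc then 1 else 0 := by
  induction n with
  | zero => simp [wordDes]
  | succ n ih =>
    have htail := ih fun i => f i.succ
    rw [List.ofFn_succ] at htail
    rw [List.ofFn_succ, List.ofFn_succ, wordDes, htail, Fin.sum_univ_succ, add_comm]
    rfl

theorem containsConsec_ofFn_iff (σ : Equiv.Perm (Fin m)) (e : Fin n ↪o α)
    (π : Equiv.Perm (Fin n)) :
    ContainsConsec σ (List.ofFn fun i => e (π i)) ↔ ConsecOccurs σ π := by
  simp [ContainsConsec, ConsecOccurs, Realizes, window]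

theorem containsQuasi_ofFn_iff (σ : Equiv.Perm (Fin m)) (e : Fin n ↪o α)
    (π : Equiv.Perm (Fin n)) :
    ContainsQuasi σ (List.ofFn fun i => e (π i)) ↔ QuasiOccurs σ π := by
  simp only [ContainsQuasi, QuasiOccurs, Realizes, window, List.mem_drop_iff_getElem,
    List.length_ofFn, List.getElem_ofFn, OrderEmbedding.lt_iff_lt]
  constructor
  · rintro ⟨i, _, hw, _, ⟨k, hk, rfl⟩, hlt⟩
    exact ⟨i, i + m + k, by omega, by omega, hw, by simpa using hlt⟩
  · rintro ⟨i, j, hij, hj, hw, hlt⟩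
    refine ⟨i, by omega, hw, _, ⟨j - (i + m), by omega, rfl⟩, ?_⟩
    simpa [Nat.add_sub_cancel' hij] using hlt

theorem wordDes_ofFn_perm (e : Fin n ↪o α) (π : Equiv.Perm (Fin n)) :
    wordDes (List.ofFn fun i => e (π i)) = des π := by
  rw [des, Finset.card_filter]
  cases n with
  | zero => simp [wordDes]
  | succ n =>
    rw [wordDes_ofFn, Fin.sum_univ_castSucc]
    simp [Fin.succ]

end Words

section Arrangements

variable {α : Type*} [DecidableEq α]

/-- The words in which every letter of the alphabet `S` occurs exactly once. -/
noncomputable def arrangements (S : Finset α) : Finset (List α) :=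
  S.val.lists.toFinset

theorem mem_arrangements {S : Finset α} {l : List α} :
    l ∈ arrangements S ↔ l.Nodup ∧ ∀ x, x ∈ l ↔ x ∈ S := by
  rw [arrangements, Multiset.mem_toFinset, Multiset.mem_lists_iff]
  constructor
  · intro h
    have hl : l.Nodup := by simpa [h] using S.nodup
    exact ⟨hl, fun x => by rw [← Finset.mem_val, h]; rfl⟩
  · rintro ⟨hl, hmem⟩
    exact (Multiset.Nodup.ext S.nodup (Multiset.coe_nodup.2 hl)).2 fun x => (hmem x).symm

theorem length_of_mem_arrangements {S : Finset α} {l : List α} (h : l ∈ arrangements S) :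
    l.length = S.card := by
  obtain ⟨hl, hmem⟩ := mem_arrangements.1 h
  rw [← List.toFinset_card_of_nodup hl]
  exact congrArg Finset.card (by ext x; simp [hmem])

theorem append_cons_mem_arrangements_insert {S T : Finset α} {M : α} (hM : M ∉ S) (hT : T ⊆ S)
    {L R : List α} (hL : L ∈ arrangements T) (hR : R ∈ arrangements (S \ T)) :
    L ++ M :: R ∈ arrangements (insert M S) := by
  simp only [mem_arrangements, Finset.mem_sdiff] at hL hR
  refine mem_arrangements.2 ⟨?_, fun x => ?_⟩
  · rw [List.nodup_append, List.nodup_cons]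
    grind
  · simp only [List.mem_append, List.mem_cons, Finset.mem_insert]
    grind

theorem exists_append_cons_of_mem_arrangements_insert {S : Finset α} {M : α} (hM : M ∉ S)
    {l : List α} (hl : l ∈ arrangements (insert M S)) :
    ∃ T ⊆ S, ∃ L ∈ arrangements T, ∃ R ∈ arrangements (S \ T), L ++ M :: R = l := by
  obtain ⟨hnodup, hmem⟩ := mem_arrangements.1 hl
  obtain ⟨L, R, rfl⟩ := List.append_of_mem ((hmem M).2 (Finset.mem_insert_self M S))
  rw [List.nodup_append, List.nodup_cons] at hnodup
  simp only [List.mem_append, List.mem_cons, Finset.mem_insert] at hmem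
  refine ⟨L.toFinset, fun x hx => ?_, L, ?_, R, ?_, rfl⟩
  · rw [List.mem_toFinset] at hx
    grind
  · exact mem_arrangements.2 ⟨hnodup.1, fun x => List.mem_toFinset.symm⟩
  · refine mem_arrangements.2 ⟨hnodup.2.1.2, fun x => ?_⟩
    rw [Finset.mem_sdiff, List.mem_toFinset]
    grind

theorem sum_arrangements_insert {N : Type*} [AddCommMonoid N] {S : Finset α} {M : α}
    (hM : M ∉ S) (F : List α → N) :
    ∑ l ∈ arrangements (insert M S), F l =
      ∑ T ∈ S.powerset, ∑ L ∈ arrangements T, ∑ R ∈ arrangements (S \ T), F (L ++ M :: R) := by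
  simp_rw [← Finset.sum_product']
  rw [Finset.sum_sigma']
  symm
  refine Finset.sum_bij (fun x _ => x.2.1 ++ M :: x.2.2) ?_ ?_ ?_ fun _ _ => rfl
  · rintro ⟨T, L, R⟩ h
    simp only [Finset.mem_sigma, Finset.mem_powerset, Finset.mem_product] at h
    exact append_cons_mem_arrangements_insert hM h.1 h.2.1 h.2.2
  · rintro ⟨T, L, R⟩ h ⟨T', L', R'⟩ h' heq
    simp only [Finset.mem_sigma, Finset.mem_powerset, Finset.mem_product, mem_arrangements,
      Finset.mem_sdiff] at h h'
    have hML' : M ∉ L' := fun hmem => hM (h'.1 ((h'.2.1.2 M).1 hmem))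
    have hMR' : M ∉ R' := fun hmem => hM ((h'.2.2.2 M).1 hmem).1
    obtain ⟨rfl, -, rfl⟩ := (List.append_cons_inj_of_notMem hML' hMR').1 heq.symm
    obtain rfl : T = T' := Finset.ext fun x => (h.2.1.2 x).symm.trans (h'.2.1.2 x)
    rfl
  · intro l hl
    obtain ⟨T, hT, L, hL, R, hR, rfl⟩ := exists_append_cons_of_mem_arrangements_insert hM hl
    exact ⟨⟨T, L, R⟩, by simp [hT, hL, hR], rfl⟩

end Arrangements

section OrderedAlphabet

variable {α : Type*} [LinearOrder α] {n : ℕ}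

theorem ofFn_perm_mem_arrangements {S : Finset α} (h : S.card = n) (π : Equiv.Perm (Fin n)) :
    (List.ofFn fun i => S.orderEmbOfFin h (π i)) ∈ arrangements S := by
  refine mem_arrangements.2 ⟨?_, fun x => ?_⟩
  · exact List.nodup_ofFn.2 ((S.orderEmbOfFin h).injective.comp π.injective)
  · rw [List.mem_ofFn, ← π.surjective.exists (p := fun j => S.orderEmbOfFin h j = x),
      ← Set.mem_range, Finset.range_orderEmbOfFin, Finset.mem_coe]

theorem exists_perm_ofFn_eq {S : Finset α} (h : S.card = n) {l : List α}
    (hl : l ∈ arrangements S) :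
    ∃ π : Equiv.Perm (Fin n), (List.ofFn fun i => S.orderEmbOfFin h (π i)) = l := by
  obtain rfl : l.length = n := (length_of_mem_arrangements hl).trans h
  obtain ⟨hnodup, hmem⟩ := mem_arrangements.1 hl
  have hletter (i : Fin l.length) : ∃ j, S.orderEmbOfFin h j = l.get i := by
    rw [← Set.mem_range, Finset.range_orderEmbOfFin, Finset.mem_coe, ← hmem]
    exact l.get_mem i
  choose f hf using hletter
  have hinj : Function.Injective f := fun i j hij =>
    hnodup.injective_get (by rw [← hf, ← hf, hij])
  refine ⟨Equiv.ofBijective f (Finite.injective_iff_bijective.1 hinj), ?_⟩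
  simp [hf]

theorem sum_arrangements {N : Type*} [AddCommMonoid N] (S : Finset α) (F : List α → N) :
    ∑ l ∈ arrangements S, F l =
      ∑ π : Equiv.Perm (Fin S.card), F (List.ofFn fun i => S.orderEmbOfFin rfl (π i)) := by
  symm
  refine Finset.sum_bij (fun π _ => List.ofFn fun i => S.orderEmbOfFin rfl (π i))
    (fun π _ => ofFn_perm_mem_arrangements rfl π) (fun π _ π' _ heq => ?_) (fun l hl => ?_)
    fun _ _ => rfl
  · exact Equiv.ext fun i =>
      (S.orderEmbOfFin rfl).injective (congrFun (List.ofFn_injective heq) i)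
  · obtain ⟨π, hπ⟩ := exists_perm_ofFn_eq rfl hl
    exact ⟨π, Finset.mem_univ π, hπ⟩

end OrderedAlphabet

section DescentPolynomials

open Polynomial

variable {α : Type*} [LinearOrder α] {m : ℕ}

/-- The contribution of a word to the descent polynomial of the words avoiding a pattern:
`P l` says that `l` contains the pattern. -/
noncomputable def avoidWeight (P : List α → Prop) (l : List α) : ℚ[X] :=
  if ¬ P l then X ^ wordDes l else 0

theorem aconsPoly_card (σ : Equiv.Perm (Fin m)) (S : Finset α) :
    AconsPoly σ S.card = ∑ l ∈ arrangements S, avoidWeight (ContainsConsec σ) l := by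
  rw [sum_arrangements, AconsPoly, Finset.sum_filter]
  refine Finset.sum_congr rfl fun π _ => if_congr ?_ ?_ rfl
  · exact not_congr (containsConsec_ofFn_iff σ _ π).symm
  · rw [wordDes_ofFn_perm]

theorem aquasiPoly_card (σ : Equiv.Perm (Fin m)) (S : Finset α) :
    AquasiPoly σ S.card = ∑ l ∈ arrangements S, avoidWeight (ContainsQuasi σ) l := by
  rw [sum_arrangements, AquasiPoly, Finset.sum_filter]
  refine Finset.sum_congr rfl fun π _ => if_congr ?_ ?_ rfl
  · exact not_congr (containsQuasi_ofFn_iff σ _ π).symm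
  · rw [wordDes_ofFn_perm]

theorem avoidWeight_containsQuasi_append_cons (σ : Equiv.Perm (Fin m)) {L R : List α} {M : α}
    (hL : ∀ x ∈ L, x < M) (hR : ∀ x ∈ R, x < M) :
    avoidWeight (ContainsQuasi σ) (L ++ M :: R) =
      (if R = [] then 1 else X) *
        (avoidWeight (ContainsConsec σ) L * avoidWeight (ContainsQuasi σ) R) := by
  have hdes : (X : ℚ[X]) ^ wordDes (M :: R) = (if R = [] then 1 else X) * X ^ wordDes R := by
    split_ifs with h
    · simp [h, wordDes]
    · rw [wordDes_cons_of_forall_lt hR h, pow_succ']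
  simp only [avoidWeight, containsQuasi_append_cons_iff σ hL fun x hx => (hR x hx).le,
    wordDes_append_cons R fun x hx => (hL x hx).le, pow_add, hdes]
  by_cases hσL : ContainsConsec σ L <;> by_cases hσR : ContainsQuasi σ R <;>
    simp [hσL, hσR, mul_left_comm]

theorem sum_avoidWeight_append_cons (σ : Equiv.Perm (Fin m)) {S T : Finset α} {M : α}
    (hM : ∀ x ∈ S, x < M) (hT : T ⊆ S) :
    ∑ L ∈ arrangements T, ∑ R ∈ arrangements (S \ T),
        avoidWeight (ContainsQuasi σ) (L ++ M :: R) =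
      (if T.card = S.card then 1 else X) *
        (AconsPoly σ T.card * AquasiPoly σ (S.card - T.card)) := by
  rw [← Finset.card_sdiff_of_subset hT, aconsPoly_card, aquasiPoly_card, Finset.sum_mul_sum,
    Finset.mul_sum]
  refine Finset.sum_congr rfl fun L hL => ?_
  rw [Finset.mul_sum]
  refine Finset.sum_congr rfl fun R hR => ?_
  have hnil : R = [] ↔ T.card = S.card := by
    rw [← List.length_eq_zero_iff, length_of_mem_arrangements hR,
      Finset.card_sdiff_of_subset hT]
    have hle := Finset.card_le_card hT
    omega
  rw [avoidWeight_containsQuasi_append_cons]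
  · simp only [hnil]
  · exact fun x hx => hM x (hT (((mem_arrangements.1 hL).2 x).1 hx))
  · exact fun x hx => hM x (Finset.mem_sdiff.1 (((mem_arrangements.1 hR).2 x).1 hx)).1

theorem aquasiPoly_zero (σ : Equiv.Perm (Fin m)) : AquasiPoly σ 0 = 1 := by
  simp [AquasiPoly, QuasiAvoids, QuasiOccurs, des]

theorem aquasiPoly_succ_eq_sum_powerset (σ : Equiv.Perm (Fin m)) (n : ℕ) :
    AquasiPoly σ (n + 1) = ∑ T ∈ (Finset.range n).powerset,
      (if T.card = n then 1 else X) * (AconsPoly σ T.card * AquasiPoly σ (n - T.card)) := by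
  have hmax : ∀ x ∈ Finset.range n, x < n := fun _ => Finset.mem_range.1
  have hn : n ∉ Finset.range n := Finset.notMem_range_self
  have h := aquasiPoly_card σ (insert n (Finset.range n))
  rw [Finset.card_insert_of_notMem hn, Finset.card_range, sum_arrangements_insert hn] at h
  refine h.trans (Finset.sum_congr rfl fun T hT => ?_)
  rw [sum_avoidWeight_append_cons σ hmax (Finset.mem_powerset.1 hT), Finset.card_range]

end DescentPolynomials

/-- For every consecutive pattern `σ` of length `k - 1 = m ≥ 1` and the quasi-consecutive
pattern `p = σk`, one has
`A_{n+1}^p(t) = t·∑_{i=0}^{n−1} C(n,i)·A_i^σ(t)·A_{n−i}^p(t) + A_n^σ(t)` for all `n ≥ 0`. -/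
theorem statement0 {m : ℕ} (hm : 1 ≤ m) (σ : Equiv.Perm (Fin m)) (n : ℕ) :
    AquasiPoly σ (n + 1) =
      Polynomial.X *
        (∑ i ∈ Finset.range n,
          (n.choose i : Polynomial ℚ) * (AconsPoly σ i * AquasiPoly σ (n - i))) +
      AconsPoly σ n := by
  rw [aquasiPoly_succ_eq_sum_powerset, Finset.sum_powerset_apply_card (fun i =>
      (if i = n then 1 else Polynomial.X) * (AconsPoly σ i * AquasiPoly σ (n - i))),
    Finset.card_range, Finset.sum_range_succ, Finset.mul_sum]
  congr 1
  · refine Finset.sum_congr rfl fun i hi => ?_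
    rw [if_neg (Finset.mem_range.1 hi).ne, nsmul_eq_mul, mul_left_comm]
  · rw [if_pos rfl, Nat.choose_self, one_smul, one_mul, Nat.sub_self, aquasiPoly_zero, mul_one]
end

section
/- For all n ≥ 0 and all k ≥ 0, the number of permutations π of length n avoiding the quasi-consecutive pattern 3̲2̲1 with des(π) = k equals the number of set partitions Π of {1,…,n} with blk(Π) − sing(Π) = k. -/
open scoped Classical

/-- `π` avoids the quasi-consecutive pattern 3̲2̲1: there are no (0-indexed) positions
`i` and `j` with `i + 2 ≤ j < n` such that `π_j < π_{i+1} < π_i`. -/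
def AvoidsP {n : ℕ} (π : Equiv.Perm (Fin n)) : Prop :=
  ¬ ∃ (i j : ℕ) (hj : j < n) (hij : i + 2 ≤ j),
      π ⟨j, hj⟩ < π ⟨i + 1, by omega⟩ ∧ π ⟨i + 1, by omega⟩ < π ⟨i, by omega⟩

/-!
Read a word from left to right and send each letter to the smallest letter weakly to its right. The
fibres of this suffix-minimum map are the blocks of a set partition, each letter being sent to the
minimum of its block. The word can be read back from the partition by listing the blocks in
increasing order of their minima, each block with its minimum last and its other elements
increasing, exactly when every descent bottom is a suffix minimum, which is what avoidance of
3̲2̲1 means. In such a word the descent bottoms are the minima of the non-singleton blocks.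
-/

theorem card_filter_exists_eq_of_biUnique {α β : Type*} [Fintype α] [Fintype β]
    {r : α → β → Prop} (hr : Relator.BiUnique r) :
    (Finset.univ.filter fun a => ∃ b, r a b).card =
      (Finset.univ.filter fun b => ∃ a, r a b).card := by
  let graph : Finset (α × β) := {x | r x.1 x.2}
  have rel_of_mem {x : α × β} (hx : x ∈ graph) : r x.1 x.2 := (Finset.mem_filter.1 hx).2
  have fst_injOn : Set.InjOn Prod.fst (graph : Set (α × β)) := fun _ hx _ hy h =>
    Prod.ext h (hr.2 (rel_of_mem hx) (h ▸ rel_of_mem hy))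
  have snd_injOn : Set.InjOn Prod.snd (graph : Set (α × β)) := fun _ hx _ hy h =>
    Prod.ext (hr.1 (rel_of_mem hx) (h ▸ rel_of_mem hy)) h
  calc _ = (graph.image Prod.fst).card := by congr 1; ext; simp [graph]
    _ = (graph.image Prod.snd).card := by
      rw [Finset.card_image_of_injOn fst_injOn, Finset.card_image_of_injOn snd_injOn]
    _ = _ := by congr 1; ext; simp [graph]

theorem strictMono_comp_perm_iff_eq_sort {n : ℕ} {β : Type*} [LinearOrder β] {f : Fin n → β}
    (hf : Function.Injective f) {π : Equiv.Perm (Fin n)} :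
    StrictMono (f ∘ π) ↔ π = Tuple.sort f := by
  have mono_iff : StrictMono (f ∘ π) ↔ Monotone (f ∘ π) :=
    ⟨StrictMono.monotone, fun h => h.strictMono_of_injective (hf.comp π.injective)⟩
  rw [mono_iff, ← Tuple.comp_sort_eq_comp_iff_monotone, hf.comp_left.eq_iff,
    DFunLike.coe_fn_eq]

theorem finpartition_eq_of_part_eq {α : Type*} [DecidableEq α] {s : Finset α}
    {P Q : Finpartition s} (h : ∀ a ∈ s, P.part a = Q.part a) : P = Q := by
  have parts_eq (R : Finpartition s) : R.parts = s.image R.part := by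
    ext b
    refine ⟨fun hb => Finset.mem_image.2 (R.part_surjOn hb), fun hb => ?_⟩
    obtain ⟨a, ha, rfl⟩ := Finset.mem_image.1 hb
    exact R.part_mem.2 ha
  exact Finpartition.ext (by rw [parts_eq, parts_eq, Finset.image_congr h])

theorem card_parts_sub_card_singletons {α : Type*} [DecidableEq α] {s : Finset α}
    (P : Finpartition s) :
    P.parts.card - (P.parts.filter fun b => b.card = 1).card =
      (P.parts.filter fun b => b.card ≠ 1).card := by
  rw [← Finset.card_filter_add_card_filter_not (s := P.parts) fun b => b.card = 1,
    Nat.add_sub_cancel_left]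

section BlockMinima

variable {α : Type*}

/-- A map sending every element to the minimum of its block, for the set partition of `α` into the
fibres of `m`. Such maps encode set partitions. -/
structure IsBlockMinMap [LE α] (m : α → α) : Prop where
  apply_le : ∀ v, m v ≤ v
  apply_apply : ∀ v, m (m v) = m v

/-- The minima of the non-singleton blocks of the partition encoded by `m`. -/
noncomputable def nontrivialMinima [Fintype α] (m : α → α) : Finset α :=
  {v | m v = v ∧ ∃ u, u ≠ v ∧ m u = v}

theorem mem_nontrivialMinima [Fintype α] {m : α → α} {v : α} :
    v ∈ nontrivialMinima m ↔ m v = v ∧ ∃ u, u ≠ v ∧ m u = v := by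
  simp only [nontrivialMinima, Finset.mem_filter, Finset.mem_univ, true_and]

/-- The key by which letters are sorted in the word of a partition: blocks are ordered by their
minima, and the minimum of a block is placed after its other elements. -/
noncomputable def blockKey (m : α → α) (v : α) : α ×ₗ WithTop α :=
  toLex (m v, if m v = v then ⊤ else (v : WithTop α))

theorem blockKey_lt_blockKey_iff [Preorder α] {m : α → α} {u v : α} :
    blockKey m u < blockKey m v ↔
      m u < m v ∨ m u = m v ∧ m u ≠ u ∧ (m v = v ∨ u < v) := by
  rw [blockKey, blockKey, Prod.Lex.toLex_lt_toLex]
  by_cases hu : m u = u <;> by_cases hv : m v = v <;> simp [hu, hv]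

theorem blockKey_injective (m : α → α) : Function.Injective (blockKey m) := by
  intro u v huv
  obtain ⟨hmin, hpos⟩ := Prod.ext_iff.1 (toLex.injective huv)
  by_cases hu : m u = u <;> by_cases hv : m v = v <;> simp_all

end BlockMinima

section SuffixMinima

variable {ι α : Type*} [LinearOrder ι] [LocallyFiniteOrderTop ι] [LinearOrder α]

/-- The smallest letter weakly to the right of the letter `v` in the word `π`. It is a function of
letters, not of positions, so that its fibres are sets of letters. -/
def suffixMin (π : ι ≃ α) (v : α) : α :=
  (Finset.Ici (π.symm v)).inf' Finset.nonempty_Ici π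

variable {π : ι ≃ α} {p q : ι}

theorem suffixMin_apply_le (hpq : p ≤ q) : suffixMin π (π p) ≤ π q :=
  Finset.inf'_le π (by simpa using hpq)

theorem exists_apply_eq_suffixMin (π : ι ≃ α) (p : ι) :
    ∃ q, p ≤ q ∧ π q = suffixMin π (π p) := by
  obtain ⟨q, hq, hmin⟩ :=
    Finset.exists_mem_eq_inf' (Finset.nonempty_Ici (a := π.symm (π p))) π
  exact ⟨q, by simpa using hq, hmin.symm⟩

theorem suffixMin_apply_mono (hpq : p ≤ q) : suffixMin π (π p) ≤ suffixMin π (π q) := by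
  obtain ⟨r, hqr, hr⟩ := exists_apply_eq_suffixMin π q
  exact hr ▸ suffixMin_apply_le (hpq.trans hqr)

theorem suffixMin_apply_ne_of_lt (hpq : p < q) : suffixMin π (π q) ≠ π p := by
  obtain ⟨r, hqr, hr⟩ := exists_apply_eq_suffixMin π q
  exact hr ▸ π.injective.ne (hpq.trans_le hqr).ne'

theorem suffixMin_apply_eq_self_iff :
    suffixMin π (π p) = π p ↔ ∀ q, p < q → π p ≤ π q := by
  constructor
  · intro h q hpq
    exact h ▸ suffixMin_apply_le hpq.le
  · intro h
    obtain ⟨q, hpq, hq⟩ := exists_apply_eq_suffixMin π p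
    refine (suffixMin_apply_le le_rfl).antisymm (hq ▸ ?_)
    obtain rfl | hlt := hpq.eq_or_lt
    exacts [le_rfl, h q hlt]

theorem isBlockMinMap_suffixMin (π : ι ≃ α) : IsBlockMinMap (suffixMin π) := by
  have suffixMin_le (v : α) : suffixMin π v ≤ v := by
    simpa using suffixMin_apply_le (π := π) (le_refl (π.symm v))
  refine ⟨suffixMin_le, fun v => (suffixMin_le _).antisymm ?_⟩
  obtain ⟨q, hvq, hq⟩ := exists_apply_eq_suffixMin π (π.symm v)
  rw [π.apply_symm_apply] at hq
  simpa [hq] using suffixMin_apply_mono (π := π) hvq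

theorem suffixMin_apply_of_covBy (hpq : p ⋖ q) :
    suffixMin π (π p) = min (π p) (suffixMin π (π q)) := by
  refine le_antisymm (le_min (suffixMin_apply_le le_rfl) (suffixMin_apply_mono hpq.le)) ?_
  obtain ⟨r, hpr, hr⟩ := exists_apply_eq_suffixMin π p
  rw [← hr]
  obtain rfl | hlt := hpr.eq_or_lt
  · exact min_le_left _ _
  · exact (min_le_right _ _).trans (suffixMin_apply_le (hpq.ge_of_gt hlt))

/-- Every descent bottom of the word `π` is a suffix minimum (a right-to-left minimum). -/
def HasMinimalDescentBottoms (π : ι ≃ α) : Prop :=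
  ∀ ⦃p q⦄, p ⋖ q → π q < π p → suffixMin π (π q) = π q

theorem blockKey_suffixMin_lt_iff_of_covBy (hpq : p ⋖ q) :
    blockKey (suffixMin π) (π p) < blockKey (suffixMin π) (π q) ↔
      (π q < π p → suffixMin π (π q) = π q) := by
  have hne : suffixMin π (π q) ≠ π p := suffixMin_apply_ne_of_lt hpq.lt
  rw [blockKey_lt_blockKey_iff, suffixMin_apply_of_covBy hpq]
  obtain hlt | hlt := hne.lt_or_gt
  · have hasc : π p < π q ↔ ¬ π q < π p :=
      ⟨not_lt_of_gt, fun h => (not_lt.1 h).lt_of_ne (π.injective.ne hpq.ne)⟩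
    simp only [min_eq_right hlt.le, lt_irrefl, false_or, true_and, hne, ne_eq,
      not_false_eq_true, hasc]
    tauto
  · have hasc : π p < π q := hlt.trans_le (suffixMin_apply_le le_rfl)
    simp [min_eq_left hlt.le, hlt, hasc.not_gt]

theorem strictMono_blockKey_suffixMin_iff [LocallyFiniteOrder ι] :
    StrictMono (blockKey (suffixMin π) ∘ π) ↔ HasMinimalDescentBottoms π := by
  rw [strictMono_iff_forall_covBy]
  exact forall₃_congr fun _ _ => blockKey_suffixMin_lt_iff_of_covBy

theorem suffixMin_eq_of_strictMono_blockKey {m : α → α} (hm : IsBlockMinMap m)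
    (hπ : StrictMono (blockKey m ∘ π)) : suffixMin π = m := by
  refine funext (π.surjective.forall.2 fun p => ?_)
  apply le_antisymm
  · suffices p ≤ π.symm (m (π p)) by simpa using suffixMin_apply_le (π := π) this
    by_contra! hlt
    have hkey := hπ hlt
    simp [blockKey_lt_blockKey_iff, hm.apply_apply] at hkey
  · obtain ⟨q, hpq, hq⟩ := exists_apply_eq_suffixMin π p
    have hmono : m (π p) ≤ m (π q) := Prod.Lex.monotone_fst _ _ (hπ.monotone hpq)
    exact hq ▸ hmono.trans (hm.apply_le _)

theorem exists_descent_iff_mem_nontrivialMinima [IsStronglyCoatomic ι] [Fintype α]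
    (hπ : HasMinimalDescentBottoms π) :
    (∃ p, p ⋖ q ∧ π q < π p) ↔ π q ∈ nontrivialMinima (suffixMin π) := by
  rw [mem_nontrivialMinima]
  constructor
  · rintro ⟨p, hpq, hdesc⟩
    have hmin := hπ hpq hdesc
    refine ⟨hmin, π p, hdesc.ne', ?_⟩
    rw [suffixMin_apply_of_covBy hpq, hmin, min_eq_right hdesc.le]
  · rintro ⟨-, u, hne, hu⟩
    obtain ⟨o, rfl⟩ := π.surjective u
    have hoq : o < q := by
      by_contra! hqo
      obtain hlt | rfl := hqo.lt_or_eq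
      · exact suffixMin_apply_ne_of_lt hlt hu
      · exact hne rfl
    obtain ⟨p, hop, hpq⟩ := exists_le_covBy_of_lt hoq
    have hle : π q ≤ π p := hu ▸ suffixMin_apply_le hop
    exact ⟨p, hpq, hle.lt_of_ne (π.injective.ne hpq.lt.ne')⟩

end SuffixMinima

section Permutations

variable {n : ℕ}

theorem fin_exists_covBy_and_iff {p : Fin n} {C : Fin n → Prop} :
    (∃ q, p ⋖ q ∧ C q) ↔ ∃ h : (p : ℕ) + 1 < n, C ⟨p + 1, h⟩ := by
  simp only [Fin.covBy_iff, Nat.covBy_iff_add_one_eq]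
  constructor
  · rintro ⟨⟨_, hlt⟩, rfl, hC⟩
    exact ⟨hlt, hC⟩
  · rintro ⟨hlt, hC⟩
    exact ⟨_, rfl, hC⟩

theorem avoidsP_iff_forall_covBy {π : Equiv.Perm (Fin n)} :
    AvoidsP π ↔ ∀ ⦃p q⦄, p ⋖ q → π q < π p → ∀ r, q < r → π q ≤ π r := by
  simp only [Fin.covBy_iff, Nat.covBy_iff_add_one_eq]
  constructor
  · rintro hπ p ⟨_, hq⟩ rfl hdesc r hqr
    exact not_lt.1 fun hlow => hπ ⟨p, r, r.isLt, hqr, hlow, hdesc⟩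
  · rintro hπ ⟨i, j, hj, hij, hlow, hdesc⟩
    exact (hπ rfl hdesc ⟨j, hj⟩ hij).not_gt hlow

theorem avoidsP_iff_hasMinimalDescentBottoms {π : Equiv.Perm (Fin n)} :
    AvoidsP π ↔ HasMinimalDescentBottoms π := by
  simp only [avoidsP_iff_forall_covBy, HasMinimalDescentBottoms, suffixMin_apply_eq_self_iff]

theorem des_eq_card_descentBottoms (π : Equiv.Perm (Fin n)) :
    des π = (Finset.univ.filter fun q => ∃ p, p ⋖ q ∧ π q < π p).card := by
  have covBy_biUnique : Relator.BiUnique fun p q : Fin n => p ⋖ q ∧ π q < π p :=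
    ⟨fun _ _ _ h h' => h.1.unique_left h'.1, fun _ _ _ h h' => h.1.unique_right h'.1⟩
  unfold des
  convert card_filter_exists_eq_of_biUnique covBy_biUnique using 4
  exact (fin_exists_covBy_and_iff (C := fun q => π q < π _)).symm

theorem des_eq_card_nontrivialMinima {π : Equiv.Perm (Fin n)} (hπ : HasMinimalDescentBottoms π) :
    des π = (nontrivialMinima (suffixMin π)).card := by
  simp only [des_eq_card_descentBottoms, exists_descent_iff_mem_nontrivialMinima hπ]
  rw [← Finset.card_map π.toEmbedding]
  congr 1
  ext v
  simp

/-- The correspondence between permutations avoiding 3̲2̲1 and set partitions, the latter encoded by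
their block minima. Its inverse sorts the letters by `blockKey`. -/
noncomputable def avoidersEquivBlockMinMaps :
    {π : Equiv.Perm (Fin n) // AvoidsP π} ≃ {m : Fin n → Fin n // IsBlockMinMap m} where
  toFun π := ⟨suffixMin π.1, isBlockMinMap_suffixMin π.1⟩
  invFun m := ⟨Tuple.sort (blockKey m.1), by
    have hsort : StrictMono (blockKey m.1 ∘ Tuple.sort (blockKey m.1)) :=
      (strictMono_comp_perm_iff_eq_sort (blockKey_injective m.1)).2 rfl
    rwa [avoidsP_iff_hasMinimalDescentBottoms, ← strictMono_blockKey_suffixMin_iff,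
      suffixMin_eq_of_strictMono_blockKey m.2 hsort]⟩
  left_inv π := by
    have hπ := avoidsP_iff_hasMinimalDescentBottoms.1 π.2
    exact Subtype.ext ((strictMono_comp_perm_iff_eq_sort (blockKey_injective _)).1
      (strictMono_blockKey_suffixMin_iff.2 hπ)).symm
  right_inv m := Subtype.ext <| suffixMin_eq_of_strictMono_blockKey m.2 <|
    (strictMono_comp_perm_iff_eq_sort (blockKey_injective m.1)).2 rfl

end Permutations

section SetPartitions

variable {α : Type*} [LinearOrder α] [Fintype α]

/-- The minimum of the block of `P` containing `v`. -/
def blockMin (P : Finpartition (Finset.univ : Finset α)) (v : α) : α :=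
  (P.part v).min' ⟨v, P.mem_part (Finset.mem_univ v)⟩

theorem blockMin_mem_part (P : Finpartition (Finset.univ : Finset α)) (v : α) :
    blockMin P v ∈ P.part v :=
  Finset.min'_mem _ _

theorem mem_part_iff_blockMin_eq {P : Finpartition (Finset.univ : Finset α)} {u v : α} :
    u ∈ P.part v ↔ blockMin P u = blockMin P v := by
  have part_eq_of_mem {u v : α} (h : u ∈ P.part v) : P.part u = P.part v :=
    P.part_eq_of_mem (P.part_mem.2 (Finset.mem_univ v)) h
  constructor
  · intro huv
    simp only [blockMin, part_eq_of_mem huv]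
  · intro h
    rw [← part_eq_of_mem (blockMin_mem_part P v), ← h, part_eq_of_mem (blockMin_mem_part P u)]
    exact P.mem_part (Finset.mem_univ u)

theorem isBlockMinMap_blockMin (P : Finpartition (Finset.univ : Finset α)) :
    IsBlockMinMap (blockMin P) where
  apply_le v := Finset.min'_le _ _ (P.mem_part (Finset.mem_univ v))
  apply_apply v := mem_part_iff_blockMin_eq.1 (blockMin_mem_part P v)

theorem blockMin_ofSetoid_ker {m : α → α} (hm : IsBlockMinMap m) :
    blockMin (Finpartition.ofSetoid (Setoid.ker m)) = m := by
  funext v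
  refine (Finset.min'_eq_iff _ _ _).2 ⟨?_, fun u hu => ?_⟩
  · exact Finpartition.mem_part_ofSetoid_iff_rel.2 (hm.apply_apply v).symm
  · have huv : m v = m u := Finpartition.mem_part_ofSetoid_iff_rel.1 hu
    exact huv ▸ hm.apply_le u

theorem finpartition_eq_of_blockMin_eq {P Q : Finpartition (Finset.univ : Finset α)}
    (h : blockMin P = blockMin Q) : P = Q :=
  finpartition_eq_of_part_eq fun v _ => Finset.ext fun u => by
    rw [mem_part_iff_blockMin_eq, mem_part_iff_blockMin_eq, h]

/-- The encoding of set partitions by their block minima. Its inverse takes the fibres of the map as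
blocks. -/
noncomputable def finpartitionEquivBlockMinMaps :
    Finpartition (Finset.univ : Finset α) ≃ {m : α → α // IsBlockMinMap m} where
  toFun P := ⟨blockMin P, isBlockMinMap_blockMin P⟩
  invFun m := Finpartition.ofSetoid (Setoid.ker m.1)
  left_inv P := finpartition_eq_of_blockMin_eq (blockMin_ofSetoid_ker (isBlockMinMap_blockMin P))
  right_inv m := Subtype.ext (blockMin_ofSetoid_ker m.2)

theorem mem_nontrivialMinima_blockMin_iff {P : Finpartition (Finset.univ : Finset α)} {v : α} :
    v ∈ nontrivialMinima (blockMin P) ↔ blockMin P v = v ∧ (P.part v).card ≠ 1 := by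
  have hv : v ∈ P.part v := P.mem_part (Finset.mem_univ v)
  rw [mem_nontrivialMinima]
  refine and_congr_right fun hmin => ?_
  constructor
  · rintro ⟨u, hne, hu⟩
    have huv : u ∈ P.part v := mem_part_iff_blockMin_eq.2 (hu.trans hmin.symm)
    exact (Finset.one_lt_card.2 ⟨u, huv, v, hv, hne⟩).ne'
  · intro hcard
    have hnontrivial : (P.part v).Nontrivial :=
      (Finset.nontrivial_iff_ne_singleton hv).2 fun h => hcard (Finset.card_eq_one.2 ⟨v, h⟩)
    obtain ⟨u, huv, hne⟩ := hnontrivial.exists_ne v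
    exact ⟨u, hne, (mem_part_iff_blockMin_eq.1 huv).trans hmin⟩

theorem card_nonsingleton_parts (P : Finpartition (Finset.univ : Finset α)) :
    (P.parts.filter fun b => b.card ≠ 1).card = (nontrivialMinima (blockMin P)).card := by
  symm
  refine Finset.card_nbij P.part (fun v hv => ?_) (fun u hu v hv huv => ?_) fun b hb => ?_
  · exact Finset.mem_filter.2
      ⟨P.part_mem.2 (Finset.mem_univ v), (mem_nontrivialMinima_blockMin_iff.1 hv).2⟩
  · rw [← (mem_nontrivialMinima.1 hu).1, ← (mem_nontrivialMinima.1 hv).1]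
    exact mem_part_iff_blockMin_eq.1 (huv ▸ P.mem_part (Finset.mem_univ u))
  · obtain ⟨hb, hcard⟩ := Finset.mem_filter.1 hb
    obtain ⟨v, -, rfl⟩ := P.part_surjOn hb
    have hpart : P.part (blockMin P v) = P.part v := P.part_eq_of_mem hb (blockMin_mem_part P v)
    refine ⟨blockMin P v, mem_nontrivialMinima_blockMin_iff.2 ⟨?_, hpart ▸ hcard⟩, hpart⟩
    exact (isBlockMinMap_blockMin P).apply_apply v

end SetPartitions

/-- For all `n ≥ 0` and `k ≥ 0`, the number of permutations of length `n` avoiding the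
quasi-consecutive pattern 3̲2̲1 with `des(π) = k` equals the number of set partitions `Π`
of `{1,…,n}` with `blk(Π) − sing(Π) = k`. -/
theorem statement9 (n k : ℕ) :
    Nat.card {π : Equiv.Perm (Fin n) // AvoidsP π ∧ des π = k} =
      Nat.card {P : Finpartition (Finset.univ : Finset (Fin n)) //
        P.parts.card - (P.parts.filter fun b => b.card = 1).card = k} := by
  let e : {π : Equiv.Perm (Fin n) // AvoidsP π} ≃ Finpartition (Finset.univ : Finset (Fin n)) :=
    avoidersEquivBlockMinMaps.trans finpartitionEquivBlockMinMaps.symm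
  have des_eq (π : {π : Equiv.Perm (Fin n) // AvoidsP π}) :
      des π.1 = (e π).parts.card - ((e π).parts.filter fun b => b.card = 1).card := by
    have hmin : suffixMin π.1 = blockMin (e π) :=
      (blockMin_ofSetoid_ker (isBlockMinMap_suffixMin π.1)).symm
    rw [des_eq_card_nontrivialMinima (avoidsP_iff_hasMinimalDescentBottoms.1 π.2), hmin,
      card_parts_sub_card_singletons, card_nonsingleton_parts]
  exact Nat.card_congr <| (Equiv.subtypeSubtypeEquivSubtypeInter _ _).symm.trans <|
    e.subtypeEquiv fun π => by rw [des_eq]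
end

section
/- For all n ≥ 1 and all 0 ≤ k ≤ n−1, the number of permutations of length n avoiding the quasi-consecutive pattern 3̲1̲2 with exactly k descents, and likewise the number of permutations of length n avoiding the quasi-consecutive pattern 1̲3̲2 with exactly k descents, both equal the Narayana number N_{n,k} = (1/(k+1))·binom(n,k)·binom(n−1,k). -/
open scoped Classical

/-- `π` avoids the quasi-consecutive pattern 3̲1̲2: there are no (0-indexed) positions
`i` and `j` with `i + 2 ≤ j < n` such that `π_{i+1} < π_j < π_i`. -/
def AvoidsP312 {n : ℕ} (π : Equiv.Perm (Fin n)) : Prop :=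
  ¬ ∃ (i j : ℕ) (hj : j < n) (hij : i + 2 ≤ j),
      π ⟨i + 1, by omega⟩ < π ⟨j, hj⟩ ∧ π ⟨j, hj⟩ < π ⟨i, by omega⟩

/-- `π` avoids the quasi-consecutive pattern 1̲3̲2: there are no (0-indexed) positions
`i` and `j` with `i + 2 ≤ j < n` such that `π_i < π_j < π_{i+1}`. -/
def AvoidsP132 {n : ℕ} (π : Equiv.Perm (Fin n)) : Prop :=
  ¬ ∃ (i j : ℕ) (hj : j < n) (hij : i + 2 ≤ j),
      π ⟨i, by omega⟩ < π ⟨j, hj⟩ ∧ π ⟨j, hj⟩ < π ⟨i + 1, by omega⟩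

/-!
Deleting the first entry of a `1̲3̲2`-avoider `π` and standardizing leaves a `1̲3̲2`-avoider `σ`.
Conversely, prepending `a` to `σ` keeps the avoidance exactly when `σ 0 ≤ a`: otherwise `a`, `σ 0`
and the entry of `σ` with value `a`, now raised to `a + 1`, form a forbidden pattern. The prepended
entry creates a descent exactly when `σ 0 < a`. This yields a recurrence for the number of avoiders
of length `n + 1` with `k` descents and first value `a`, whose partial sums over `a ≤ A` are the
determinants `C(A+1, k+1) C(n, k) - C(A, k+1) C(n+1, k)`; at `A = n` these are the Narayana numbers.

Complementing values exchanges the two patterns and, in length `n + 1`, turns `k` descents into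
`n - k`, so the count for `3̲1̲2` follows from the symmetry of the Narayana numbers.
-/

section

open Equiv Finset

variable {n : ℕ}

theorem avoidsP132_iff (π : Perm (Fin (n + 1))) :
    AvoidsP132 π ↔
      ∀ (i : Fin n) (j : Fin (n + 1)), i.succ < j → π i.castSucc < π j → π i.succ ≤ π j := by
  constructor
  · intro h i j hij hlt
    by_contra! hgt
    exact h ⟨i, j, j.2, hij, hlt, hgt⟩
  · rintro h ⟨i, j, hj, hij, hlt, hgt⟩
    exact (h ⟨i, by omega⟩ ⟨j, hj⟩ hij hlt).not_gt hgt

theorem des_eq_card (π : Perm (Fin (n + 1))) :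
    des π = #{i : Fin n | π i.succ < π i.castSucc} := by
  rw [des, card_filter, card_filter, Fin.sum_univ_castSucc]
  simp [Fin.succ]

/-- Prepends the value `a` to the one-line notation of `σ`, raising the values `≥ a` by one. -/
def prepend (a : Fin (n + 1)) (σ : Perm (Fin n)) : Perm (Fin (n + 1)) :=
  (finSuccEquiv n).trans (σ.optionCongr.trans (finSuccEquiv' a).symm)

@[simp]
theorem prepend_zero (a : Fin (n + 1)) (σ : Perm (Fin n)) : prepend a σ 0 = a := by
  simp [prepend]

@[simp]
theorem prepend_succ (a : Fin (n + 1)) (σ : Perm (Fin n)) (i : Fin n) :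
    prepend a σ i.succ = a.succAbove (σ i) := by
  simp [prepend]

theorem prepend_injective (a : Fin (n + 1)) : Function.Injective (prepend a) := by
  intro σ τ h
  ext1 i
  apply Fin.succAbove_right_injective (p := a)
  rw [← prepend_succ, h, prepend_succ]

theorem exists_prepend_eq (π : Perm (Fin (n + 1))) : ∃ σ, prepend (π 0) σ = π := by
  have hne (i : Fin n) : π i.succ ≠ π 0 := π.injective.ne i.succ_ne_zero
  choose f hf using fun i => Fin.exists_succAbove_eq (hne i)
  have f_injective : Function.Injective f := fun i j hij =>
    Fin.succ_injective n (π.injective (by rw [← hf, hij, hf]))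
  refine ⟨ofBijective f (Finite.injective_iff_bijective.mp f_injective), ?_⟩
  ext1 i
  cases i using Fin.cases <;> simp [hf]

theorem card_filter_apply_zero_eq (s : Finset (Perm (Fin (n + 1)))) (a : Fin (n + 1)) :
    #{π ∈ s | π 0 = a} = #{σ | prepend a σ ∈ s} := by
  rw [← card_image_of_injective _ (prepend_injective a)]
  congr 1
  ext π
  simp only [mem_filter, mem_image, mem_univ, true_and]
  constructor
  · rintro ⟨hπ, rfl⟩
    obtain ⟨σ, hσ⟩ := exists_prepend_eq π
    exact ⟨σ, hσ.symm ▸ hπ, hσ⟩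
  · rintro ⟨σ, hσ, rfl⟩
    exact ⟨hσ, prepend_zero a σ⟩

theorem forall_castSucc_le_imp_apply_zero_le_iff (σ : Perm (Fin (n + 1))) (a : Fin (n + 2)) :
    (∀ j, a ≤ (σ j).castSucc → σ 0 ≤ σ j) ↔ (σ 0).castSucc ≤ a := by
  refine ⟨fun h => ?_, fun h j hj => Fin.castSucc_le_castSucc_iff.mp (h.trans hj)⟩
  by_contra! hlt
  obtain ⟨b, rfl⟩ := Fin.exists_castSucc_eq.mpr (Fin.ne_last_of_lt hlt)
  have hle := h (σ.symm b) (by simp)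
  rw [apply_symm_apply] at hle
  exact (Fin.castSucc_lt_castSucc_iff.mp hlt).not_ge hle

theorem avoidsP132_prepend_iff (a : Fin (n + 2)) (σ : Perm (Fin (n + 1))) :
    AvoidsP132 (prepend a σ) ↔ AvoidsP132 σ ∧ (σ 0).castSucc ≤ a := by
  rw [← forall_castSucc_le_imp_apply_zero_le_iff, avoidsP132_iff, avoidsP132_iff,
    Fin.forall_fin_succ, and_comm]
  simp only [Fin.forall_fin_succ (n := n + 1), Fin.castSucc_zero, Fin.castSucc_succ, prepend_zero,
    prepend_succ, Fin.succ_lt_succ_iff, Fin.succAbove_lt_succAbove_iff,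
    Fin.succAbove_le_succAbove_iff, Fin.lt_succAbove_iff_le_castSucc, Fin.not_lt_zero,
    false_imp_iff, true_and]
  refine and_congr_right fun _ => forall_congr' fun j => ?_
  cases j using Fin.cases <;> simp

theorem des_prepend (a : Fin (n + 2)) (σ : Perm (Fin (n + 1))) :
    des (prepend a σ) = des σ + if (σ 0).castSucc < a then 1 else 0 := by
  rw [des_eq_card, des_eq_card, Fin.card_filter_univ_succ', add_comm]
  simp only [Fin.castSucc_succ, Fin.castSucc_zero, prepend_zero, prepend_succ,
    Fin.succAbove_lt_succAbove_iff, Fin.succAbove_lt_iff_castSucc_lt]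

/-- The `1̲3̲2`-avoiding permutations of length `n` with exactly `k` descents. -/
noncomputable def avoidersP132 (n k : ℕ) : Finset (Perm (Fin n)) :=
  {π | AvoidsP132 π ∧ des π = k}

theorem mem_avoidersP132 {k : ℕ} {π : Perm (Fin n)} :
    π ∈ avoidersP132 n k ↔ AvoidsP132 π ∧ des π = k := by
  simp [avoidersP132]

theorem prepend_mem_avoidersP132_zero_iff {a : Fin (n + 2)} {σ : Perm (Fin (n + 1))} :
    prepend a σ ∈ avoidersP132 (n + 2) 0 ↔
      σ ∈ avoidersP132 (n + 1) 0 ∧ (σ 0).castSucc = a := by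
  simp only [mem_avoidersP132, avoidsP132_prepend_iff, des_prepend]
  grind

theorem prepend_mem_avoidersP132_succ_iff {k : ℕ} {a : Fin (n + 2)} {σ : Perm (Fin (n + 1))} :
    prepend a σ ∈ avoidersP132 (n + 2) (k + 1) ↔
      σ ∈ avoidersP132 (n + 1) (k + 1) ∧ (σ 0).castSucc = a ∨
        σ ∈ avoidersP132 (n + 1) k ∧ (σ 0).castSucc < a := by
  simp only [mem_avoidersP132, avoidsP132_prepend_iff, des_prepend]
  grind

/-- The number of `1̲3̲2`-avoiders of length `n + 1` with `k` descents and first value `a`. Values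
are counted from `0`, and the count vanishes for `a > n`. -/
noncomputable def firstValueCount (n k a : ℕ) : ℕ :=
  #{π ∈ avoidersP132 (n + 1) k | (π 0 : ℕ) = a}

theorem firstValueCount_eq_zero {k a : ℕ} (h : n < a) : firstValueCount n k a = 0 := by
  rw [firstValueCount, card_eq_zero, filter_eq_empty_iff]
  intro π _
  omega

theorem sum_firstValueCount_eq_card_filter (n k : ℕ) (s : Finset ℕ) :
    ∑ a ∈ s, firstValueCount n k a = #{π ∈ avoidersP132 (n + 1) k | (π 0 : ℕ) ∈ s} :=
  sum_card_fiberwise_eq_card_filter _ _ _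

theorem sum_firstValueCount (n k : ℕ) :
    ∑ a ∈ range (n + 1), firstValueCount n k a = #(avoidersP132 (n + 1) k) := by
  rw [sum_firstValueCount_eq_card_filter, filter_true_of_mem fun π _ => mem_range.mpr (π 0).2]

theorem firstValueCount_zero_zero (k : ℕ) :
    firstValueCount 0 k 0 = if k = 0 then 1 else 0 := by
  have mem_iff (π : Perm (Fin 1)) : π ∈ avoidersP132 1 k ↔ k = 0 := by
    rw [mem_avoidersP132, avoidsP132_iff, des_eq_card]
    simp [eq_comm]
  rw [firstValueCount, filter_true_of_mem (by simp), ← filter_univ_mem (avoidersP132 _ _)]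
  simp only [mem_iff]
  split_ifs with hk <;> simp [hk]

theorem firstValueCount_succ_eq_card {k a : ℕ} (ha : a ≤ n + 1) :
    firstValueCount (n + 1) k a =
      #{σ | prepend (⟨a, by omega⟩ : Fin (n + 2)) σ ∈ avoidersP132 (n + 2) k} := by
  simp only [firstValueCount, ← card_filter_apply_zero_eq, Fin.ext_iff]

theorem firstValueCount_succ_zero {a : ℕ} (ha : a ≤ n + 1) :
    firstValueCount (n + 1) 0 a = firstValueCount n 0 a := by
  rw [firstValueCount_succ_eq_card ha, firstValueCount]
  simp only [prepend_mem_avoidersP132_zero_iff, Fin.ext_iff, Fin.val_castSucc, ← filter_filter,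
    filter_univ_mem]

theorem firstValueCount_succ_succ {k a : ℕ} (ha : a ≤ n + 1) :
    firstValueCount (n + 1) (k + 1) a =
      firstValueCount n (k + 1) a + ∑ b ∈ range a, firstValueCount n k b := by
  rw [firstValueCount_succ_eq_card ha, sum_firstValueCount_eq_card_filter, firstValueCount]
  simp only [prepend_mem_avoidersP132_succ_iff, Fin.ext_iff, Fin.lt_def, Fin.val_castSucc,
    filter_or, mem_range]
  rw [card_union_of_disjoint (disjoint_filter.mpr fun σ _ h h' => h'.2.ne h.2)]
  simp only [← filter_filter, filter_univ_mem]

/-- The closed form for the number of `1̲3̲2`-avoiders of length `n + 1` with `k` descents and first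
value at most `A`, written as a `2 × 2` determinant of binomial coefficients. -/
def refinedNarayana (n A k : ℕ) : ℤ :=
  (A + 1).choose (k + 1) * n.choose k - A.choose (k + 1) * (n + 1).choose k

theorem refinedNarayana_zero_right (n A : ℕ) : refinedNarayana n A 0 = 1 := by
  simp [refinedNarayana]

theorem refinedNarayana_succ_self (n k : ℕ) :
    refinedNarayana n (n + 1) k = refinedNarayana n n k := by
  simp only [refinedNarayana, Nat.choose_succ_succ (n + 1), Nat.choose_succ_succ n]
  push_cast
  ring

theorem sum_refinedNarayana (n A k : ℕ) :
    ∑ a ∈ range A, refinedNarayana n a k =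
      (A + 1).choose (k + 2) * n.choose k - A.choose (k + 2) * (n + 1).choose k := by
  induction A with
  | zero => simp [Nat.choose_eq_zero_of_lt]
  | succ A ih =>
    rw [sum_range_succ, ih, refinedNarayana, Nat.choose_succ_succ (A + 1) (k + 1),
      Nat.choose_succ_succ A (k + 1)]
    push_cast
    ring

theorem refinedNarayana_succ_succ (n A k : ℕ) :
    refinedNarayana (n + 1) A (k + 1) =
      refinedNarayana n A (k + 1) + ∑ a ∈ range A, refinedNarayana n a k := by
  rw [sum_refinedNarayana, refinedNarayana, refinedNarayana, Nat.choose_succ_succ (n + 1) k,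
    Nat.choose_succ_succ n k]
  push_cast
  ring

theorem sum_firstValueCount_succ_succ {A : ℕ} (k : ℕ) (hA : A ≤ n + 1) :
    ∑ a ∈ range (A + 1), firstValueCount (n + 1) (k + 1) a =
      ∑ a ∈ range (A + 1), firstValueCount n (k + 1) a +
        ∑ a ∈ range A, ∑ b ∈ range (a + 1), firstValueCount n k b := by
  rw [sum_congr rfl fun a ha => firstValueCount_succ_succ (by grind), sum_add_distrib,
    sum_range_succ' (fun a => ∑ b ∈ range a, firstValueCount n k b), range_zero, sum_empty,
    add_zero]

theorem sum_firstValueCount_eq_refinedNarayana (n k A : ℕ) (hA : A ≤ n) :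
    ((∑ a ∈ range (A + 1), firstValueCount n k a : ℕ) : ℤ) = refinedNarayana n A k := by
  induction n generalizing k A with
  | zero =>
    obtain rfl : A = 0 := by omega
    cases k <;> simp [firstValueCount_zero_zero, refinedNarayana]
  | succ n ih =>
    -- The recurrence also needs the value `n + 1`, which no permutation of length `n + 1` attains.
    have ih_succ (k A : ℕ) (hA : A ≤ n + 1) :
        ((∑ a ∈ range (A + 1), firstValueCount n k a : ℕ) : ℤ) = refinedNarayana n A k := by
      rcases hA.lt_or_eq with hlt | rfl
      · exact ih k A (Nat.lt_succ_iff.mp hlt)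
      · rw [sum_range_succ, firstValueCount_eq_zero n.lt_succ_self, add_zero, ih k n le_rfl,
          refinedNarayana_succ_self]
    cases k with
    | zero =>
      rw [sum_congr rfl fun a ha => firstValueCount_succ_zero (by grind), ih_succ 0 A hA,
        refinedNarayana_zero_right, refinedNarayana_zero_right]
    | succ k =>
      rw [sum_firstValueCount_succ_succ k hA, Nat.cast_add, ih_succ (k + 1) A hA, Nat.cast_sum,
        sum_congr rfl fun a ha => ih_succ k a (by grind), refinedNarayana_succ_succ]

/-- The Narayana number `N_{n,k}`, indexed by `0 ≤ k ≤ n - 1`. At `n = 0` the subtraction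
truncates. -/
def narayana (n k : ℕ) : ℚ :=
  (1 / (k + 1 : ℚ)) * (n.choose k : ℚ) * ((n - 1).choose k : ℚ)

theorem cast_choose_succ_eq (n k : ℕ) :
    (n.choose (k + 1) : ℚ) = n.choose k * (n - k) / (k + 1) := by
  rw [eq_div_iff (by positivity)]
  rcases le_or_gt k n with hk | hk
  · exact_mod_cast Nat.choose_succ_right_eq n k
  · simp [Nat.choose_eq_zero_of_lt hk, Nat.choose_eq_zero_of_lt (hk.trans k.lt_succ_self)]

theorem refinedNarayana_self (n k : ℕ) : (refinedNarayana n n k : ℚ) = narayana (n + 1) k := by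
  rw [refinedNarayana, narayana, Nat.add_sub_cancel]
  push_cast [cast_choose_succ_eq]
  ring

theorem narayana_symm {n k : ℕ} (hk : k ≤ n) : narayana (n + 1) (n - k) = narayana (n + 1) k := by
  obtain ⟨m, rfl⟩ := Nat.exists_eq_add_of_le hk
  have choose_m : (k + m + 1).choose m = (k + m + 1).choose (k + 1) :=
    Nat.choose_symm_of_eq_add (by omega)
  rw [Nat.add_sub_cancel_left, narayana, narayana, Nat.add_sub_cancel, choose_m,
    ← Nat.choose_symm_add, cast_choose_succ_eq]
  push_cast
  field_simp
  ring

theorem card_avoidersP132 (n k : ℕ) : (#(avoidersP132 (n + 1) k) : ℚ) = narayana (n + 1) k := by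
  rw [← sum_firstValueCount, ← refinedNarayana_self,
    ← sum_firstValueCount_eq_refinedNarayana n k n le_rfl, Int.cast_natCast]

theorem natCard_avoidsP132_des_eq (n k : ℕ) :
    (Nat.card {π : Perm (Fin (n + 1)) // AvoidsP132 π ∧ des π = k} : ℚ) = narayana (n + 1) k := by
  rw [← card_avoidersP132, avoidersP132, Nat.card_eq_fintype_card, Fintype.card_subtype]

theorem avoidsP132_revPerm_mul_iff (π : Perm (Fin n)) :
    AvoidsP132 (Fin.revPerm * π) ↔ AvoidsP312 π := by
  simp only [AvoidsP132, AvoidsP312, Perm.mul_apply, Fin.revPerm_apply, Fin.rev_lt_rev, and_comm]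

theorem des_revPerm_mul_add_des (π : Perm (Fin (n + 1))) :
    des (Fin.revPerm * π) + des π = n := by
  have not_descent_iff (i : Fin n) : ¬ π i.succ < π i.castSucc ↔ π i.castSucc < π i.succ :=
    not_lt.trans (π.injective.ne i.castSucc_lt_succ.ne).le_iff_lt
  simp only [des_eq_card, Perm.mul_apply, Fin.revPerm_apply, Fin.rev_lt_rev, ← not_descent_iff]
  rw [add_comm, card_filter_add_card_filter_not, card_univ, Fintype.card_fin]

theorem natCard_avoidsP312_des_eq {n k : ℕ} (hk : k ≤ n) :
    (Nat.card {π : Perm (Fin (n + 1)) // AvoidsP312 π ∧ des π = k} : ℚ) = narayana (n + 1) k := by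
  rw [← narayana_symm hk, ← natCard_avoidsP132_des_eq]
  congr 1
  refine Nat.card_congr ((Equiv.mulLeft Fin.revPerm).subtypeEquiv fun π => ?_)
  have hdes := des_revPerm_mul_add_des π
  simp only [coe_mulLeft, avoidsP132_revPerm_mul_iff]
  exact and_congr_right fun _ => by omega

end

/-- For all `n ≥ 1` and `0 ≤ k ≤ n − 1`, the number of permutations of length `n`
avoiding 3̲1̲2 (respectively 1̲3̲2) with exactly `k` descents equals the Narayana number
`N_{n,k} = (1/(k+1))·C(n,k)·C(n−1,k)`. -/
theorem statement11 (n : ℕ) (hn : 1 ≤ n) (k : ℕ) (hk : k ≤ n - 1) :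
    (Nat.card {π : Equiv.Perm (Fin n) // AvoidsP312 π ∧ des π = k} : ℚ) =
        (1 / (k + 1 : ℚ)) * (n.choose k : ℚ) * ((n - 1).choose k : ℚ) ∧
    (Nat.card {π : Equiv.Perm (Fin n) // AvoidsP132 π ∧ des π = k} : ℚ) =
        (1 / (k + 1 : ℚ)) * (n.choose k : ℚ) * ((n - 1).choose k : ℚ) := by
  obtain ⟨m, rfl⟩ : ∃ m, n = m + 1 := ⟨n - 1, by omega⟩
  exact ⟨natCard_avoidsP312_des_eq hk, natCard_avoidsP132_des_eq m k⟩
end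

section
/- The joint distribution of descents and inversions agrees on avoiders of 3̲1̲2̲4 and of 2̲3̲1̲4: for all n ≥ 1, k ≥ 0 and m ≥ 0, the number of permutations π of length n avoiding 3̲1̲2̲4 with des(π) = k and inv(π) = m equals the number of permutations π of length n avoiding 2̲3̲1̲4 with des(π) = k and inv(π) = m. -/
open scoped Classical

/-- The number of inversions of a permutation of `Fin n`. -/
def inversions {n : ℕ} (π : Equiv.Perm (Fin n)) : ℕ :=
  (Finset.univ.filter fun p : Fin n × Fin n => p.1 < p.2 ∧ π p.2 < π p.1).card

/-- `π` avoids the quasi-consecutive pattern 3̲1̲2̲4: there are no (0-indexed) positions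
`i` and `j` with `i + 3 ≤ j < n` such that π_{i+1} < π_{i+2} < π_i < π_j. -/
def AvoidsA {n : ℕ} (π : Equiv.Perm (Fin n)) : Prop :=
  ¬ ∃ (i j : ℕ) (hj : j < n) (hij : i + 3 ≤ j), π ⟨i + 1, by omega⟩ < π ⟨i + 2, by omega⟩ ∧ π ⟨i + 2, by omega⟩ < π ⟨i, by omega⟩ ∧ π ⟨i, by omega⟩ < π ⟨j, hj⟩

/-- `π` avoids the quasi-consecutive pattern 2̲3̲1̲4: there are no (0-indexed) positions
`i` and `j` with `i + 3 ≤ j < n` such that π_{i+2} < π_i < π_{i+1} < π_j. -/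
def AvoidsB {n : ℕ} (π : Equiv.Perm (Fin n)) : Prop :=
  ¬ ∃ (i j : ℕ) (hj : j < n) (hij : i + 3 ≤ j), π ⟨i + 2, by omega⟩ < π ⟨i, by omega⟩ ∧ π ⟨i, by omega⟩ < π ⟨i + 1, by omega⟩ ∧ π ⟨i + 1, by omega⟩ < π ⟨j, hj⟩

/-!
Cut a word at its right-to-left maxima: `s₁ M₁ s₂ M₂ ⋯` with `M₁ > M₂ > ⋯` and every letter of
`sᵢ` below `Mᵢ`. A block of consecutive letters has a larger letter to its right exactly when it
avoids all the `Mᵢ`, that is, lies within a single `sᵢ`. So an occurrence of the pattern is a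
consecutive occurrence of 312 (resp. 231) in some `sᵢ`. Replacing every `sᵢ` by its
reverse-complement within its own set of letters exchanges 312 and 231. It preserves the descents
and inversions inside each `sᵢ`, and all the others depend only on which letters each `sᵢ` has.
-/

namespace PermPattern

variable {α : Type*}

section ReverseComplement

variable [LinearOrder α]

/-- The order-reversing permutation of the finite set `S`, extended by the identity outside `S`. -/
noncomputable def revOn (S : Finset α) : Equiv.Perm α :=
  Fin.revPerm.extendDomain (S.orderIsoOfFin rfl).toEquiv

theorem revOn_orderIsoOfFin (S : Finset α) (i : Fin S.card) :
    revOn S (S.orderIsoOfFin rfl i) = S.orderIsoOfFin rfl i.rev :=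
  Fin.revPerm.extendDomain_apply_image (S.orderIsoOfFin rfl).toEquiv i

theorem strictAntiOn_revOn (S : Finset α) : StrictAntiOn (revOn S) S := by
  intro x hx y hy hxy
  obtain ⟨i, hi⟩ := (S.orderIsoOfFin rfl).surjective ⟨x, hx⟩
  obtain ⟨j, hj⟩ := (S.orderIsoOfFin rfl).surjective ⟨y, hy⟩
  obtain rfl : (S.orderIsoOfFin rfl i : α) = x := congrArg Subtype.val hi
  obtain rfl : (S.orderIsoOfFin rfl j : α) = y := congrArg Subtype.val hj
  simpa only [revOn_orderIsoOfFin, Subtype.coe_lt_coe, OrderIso.lt_iff_lt, Fin.rev_lt_rev]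
    using hxy

theorem revOn_mem_iff {S : Finset α} {x : α} : revOn S x ∈ S ↔ x ∈ S := by
  by_cases hx : x ∈ S
  · obtain ⟨i, hi⟩ := (S.orderIsoOfFin rfl).surjective ⟨x, hx⟩
    obtain rfl : (S.orderIsoOfFin rfl i : α) = x := congrArg Subtype.val hi
    simp only [revOn_orderIsoOfFin, Finset.coe_mem]
  · rw [revOn, Equiv.Perm.extendDomain_apply_not_subtype _ _ hx]

theorem revOn_involutive (S : Finset α) : Function.Involutive (revOn S) := by
  intro x
  have hrev : (Fin.revPerm : Equiv.Perm (Fin S.card)) * Fin.revPerm = 1 := by ext; simp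
  rw [← Equiv.Perm.mul_apply, revOn, Equiv.Perm.extendDomain_mul, hrev,
    Equiv.Perm.extendDomain_one, Equiv.Perm.one_apply]

/-- The reverse-complement of a word without repeated letters, where the complement is taken
within the set of letters of the word. -/
noncomputable def revCompl (l : List α) : List α :=
  (l.map (revOn l.toFinset)).reverse

theorem strictAntiOn_revOn_toFinset (l : List α) :
    StrictAntiOn (revOn l.toFinset) {x | x ∈ l} := by
  simpa only [List.coe_toFinset] using strictAntiOn_revOn l.toFinset

theorem revCompl_perm {l : List α} (hl : l.Nodup) : (revCompl l).Perm l := by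
  have hnodup : (revCompl l).Nodup :=
    List.nodup_reverse.2 (hl.map (revOn l.toFinset).injective)
  refine (List.perm_ext_iff_of_nodup hnodup hl).2 fun a => ?_
  rw [revCompl, List.mem_reverse, List.mem_map_of_involutive (revOn_involutive l.toFinset),
    ← List.mem_toFinset, revOn_mem_iff, List.mem_toFinset]

theorem revCompl_revCompl {l : List α} (hl : l.Nodup) : revCompl (revCompl l) = l := by
  have hletters : (revCompl l).toFinset = l.toFinset :=
    List.toFinset_eq_of_perm _ _ (revCompl_perm hl)
  rw [revCompl, hletters, revCompl, List.map_reverse, List.reverse_reverse, List.map_map,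
    (revOn_involutive l.toFinset).comp_self, List.map_id]

end ReverseComplement

theorem countP_ofFn {n : ℕ} (f : Fin n → α) (p : α → Bool) :
    (List.ofFn f).countP p = (Finset.univ.filter fun i => p (f i) = true).card := by
  induction n with
  | zero => simp
  | succ n ih =>
    rw [List.ofFn_succ, List.countP_cons, ih, Fin.card_filter_univ_succ', add_comm]

section Statistics

variable [LinearOrder α]

/-- The number of descents of a word. -/
def listDes : List α → ℕ
  | a :: b :: l => (if b < a then 1 else 0) + listDes (b :: l)
  | _ => 0

/-- The number of inversions of a word. -/
def listInv : List α → ℕ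
  | [] => 0
  | a :: l => l.countP (· < a) + listInv l

theorem listDes_append_cons (s : List α) (a : α) (t : List α) :
    listDes (s ++ a :: t) = listDes (s ++ [a]) + listDes (a :: t) := by
  induction s with
  | nil => simp [listDes]
  | cons b s ih =>
    cases s with
    | nil => simp [listDes]
    | cons c s =>
      simp only [List.cons_append, listDes] at ih ⊢
      omega

theorem listDes_concat_of_lt {M : α} {s : List α} (hs : ∀ x ∈ s, x < M) :
    listDes (s ++ [M]) = listDes s := by
  induction s with
  | nil => rfl
  | cons b s ih =>
    obtain ⟨hb, hs⟩ := List.forall_mem_cons.1 hs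
    cases s with
    | nil => simp [listDes, hb.le]
    | cons c s =>
      have ih := ih hs
      simp only [List.cons_append, listDes] at ih ⊢
      omega

theorem listDes_cons_of_lt {M : α} {t : List α} (ht : ∀ x ∈ t, x < M) :
    listDes (M :: t) = (if t.length = 0 then 0 else 1) + listDes t := by
  cases t with
  | nil => rfl
  | cons a t => simp [listDes, ht a List.mem_cons_self]

theorem listDes_reverse_map {f : α → α} {l : List α} (hf : StrictAntiOn f {x | x ∈ l}) :
    listDes (l.map f).reverse = listDes l := by
  induction l with
  | nil => rfl
  | cons a l ih =>
    have ih := ih (hf.mono fun _ => List.mem_cons_of_mem a)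
    cases l with
    | nil => rfl
    | cons b l =>
      have hab : f a < f b ↔ b < a := hf.lt_iff_gt (by simp) (by simp)
      simp only [List.map_cons, List.reverse_cons, List.append_assoc, List.cons_append,
        List.nil_append] at ih ⊢
      rw [listDes_append_cons, ih]
      simp only [listDes, hab]
      omega

theorem listInv_append (s t : List α) :
    listInv (s ++ t) = listInv s + listInv t + (s.map fun a => t.countP (· < a)).sum := by
  induction s with
  | nil => simp [listInv]
  | cons a s ih =>
    simp only [List.cons_append, listInv, ih, List.countP_append, List.map_cons, List.sum_cons]
    omega

theorem listInv_concat (s : List α) (a : α) :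
    listInv (s ++ [a]) = listInv s + s.countP (a < ·) := by
  induction s with
  | nil => simp [listInv]
  | cons b s ih =>
    simp only [List.cons_append, listInv, ih, List.countP_append, List.countP_cons,
      List.countP_nil, decide_eq_true_eq]
    omega

theorem listInv_reverse_map {f : α → α} {l : List α} (hf : StrictAntiOn f {x | x ∈ l}) :
    listInv (l.map f).reverse = listInv l := by
  induction l with
  | nil => rfl
  | cons a l ih =>
    have ih := ih (hf.mono fun _ => List.mem_cons_of_mem a)
    have hcount : l.countP (f a < f ·) = l.countP (· < a) :=
      List.countP_congr fun x hx => by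
        simpa using hf.lt_iff_gt List.mem_cons_self (List.mem_cons_of_mem a hx)
    rw [List.map_cons, List.reverse_cons, listInv_concat, ih, List.countP_reverse,
      List.countP_map, listInv, ← hcount, add_comm]
    rfl

theorem card_descents_eq_listDes {n : ℕ} (f : Fin n → α) :
    (Finset.univ.filter fun i : Fin n => ∃ h : (i : ℕ) + 1 < n, f ⟨i + 1, h⟩ < f i).card =
      listDes (List.ofFn f) := by
  induction n with
  | zero => simp [listDes]
  | succ n ih =>
    cases n with
    | zero =>
      exact Finset.card_eq_zero.2 (Finset.filter_eq_empty_iff.2 fun i _ ⟨h, _⟩ => by omega)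
    | succ n =>
      have ih := ih fun i => f i.succ
      rw [List.ofFn_succ] at ih
      rw [List.ofFn_succ, List.ofFn_succ, listDes, ← ih, Fin.card_filter_univ_succ']
      congr 1
      · simp only [Fin.val_zero, Nat.lt_add_left_iff_pos, Nat.succ_pos, exists_true_left]
        rfl
      · simp only [Fin.val_succ, Nat.add_lt_add_iff_right]
        rfl

theorem card_inversions_eq_listInv {n : ℕ} (f : Fin n → α) :
    (Finset.univ.filter fun p : Fin n × Fin n => p.1 < p.2 ∧ f p.2 < f p.1).card =
      listInv (List.ofFn f) := by
  induction n with
  | zero => simp [listInv]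
  | succ n ih =>
    have ih := ih fun i => f i.succ
    rw [List.ofFn_succ, listInv, ← ih, countP_ofFn]
    simp only [Finset.card_filter, Fintype.sum_prod_type, Fin.sum_univ_succ,
      false_and, if_false, zero_add, Fin.succ_pos, true_and, Fin.succ_lt_succ_iff,
      Fin.not_lt_zero, decide_eq_true_eq]

theorem des_eq_listDes {n : ℕ} (π : Equiv.Perm (Fin n)) : des π = listDes (List.ofFn π) := by
  rw [← card_descents_eq_listDes, des]

theorem inversions_eq_listInv {n : ℕ} (π : Equiv.Perm (Fin n)) :
    inversions π = listInv (List.ofFn π) := by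
  rw [← card_inversions_eq_listInv, inversions]

end Statistics

section Occurrences

/-- `P` is a consecutive pattern, viewed as a property of words; `HasFactor P l` says that some
block of consecutive letters of `l` is an occurrence of it. -/
def HasFactor (P : List α → Prop) (l : List α) : Prop :=
  ∃ w, w <:+: l ∧ P w

/-- Some block of consecutive letters of `l` satisfies `P` and is followed, not necessarily
immediately, by a letter `b` larger than all of its letters. -/
def HasDominatedFactor [LT α] (P : List α → Prop) (l : List α) : Prop :=
  ∃ w v, w ++ v <:+ l ∧ P w ∧ ∃ b ∈ v, ∀ a ∈ w, a < b

/-- The patterns `P` and `Q` are reverse-complements of each other: a word is an occurrence of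
`P` exactly when its image under an order-reversing relabelling, read backwards, is one of `Q`. -/
def AreRevCompl [Preorder α] (P Q : List α → Prop) : Prop :=
  ∀ (w : List α) (f : α → α), StrictAntiOn f {x | x ∈ w} → (Q (w.map f).reverse ↔ P w)

/-- The consecutive pattern whose occurrences are the words `xyz` with `T x y z`. -/
def IsTriple (T : α → α → α → Prop) (w : List α) : Prop :=
  ∃ x y z, w = [x, y, z] ∧ T x y z

theorem hasFactor_reverse_map_iff [Preorder α] {P Q : List α → Prop} (hPQ : AreRevCompl P Q)
    {f : α → α} {l : List α} (hf : StrictAntiOn f {x | x ∈ l}) :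
    HasFactor Q (l.map f).reverse ↔ HasFactor P l := by
  have key {w : List α} (hw : w <:+: l) : Q (w.map f).reverse ↔ P w :=
    hPQ w f (hf.mono fun _ hx => hw.subset hx)
  constructor
  · rintro ⟨w', hw', hQ⟩
    rw [← List.reverse_reverse w', List.reverse_infix] at hw'
    obtain ⟨w, hw, hww'⟩ := List.infix_map_iff.1 hw'
    rw [List.reverse_eq_iff] at hww'
    exact ⟨w, hw, (key hw).1 (hww' ▸ hQ)⟩
  · rintro ⟨w, hw, hP⟩
    exact ⟨(w.map f).reverse, List.reverse_infix.2 (hw.map f), (key hw).2 hP⟩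

theorem append_suffix_append_cons {s t w v : List α} {M : α} (hM : M ∉ w)
    (h : w ++ v <:+ s ++ M :: t) : w <:+: s ∨ w ++ v <:+ t := by
  obtain ⟨u, hu⟩ := h
  rcases List.append_eq_append_iff.1 hu with ⟨c, rfl, hc⟩ | ⟨c, rfl, hc⟩
  · rcases List.append_eq_append_iff.1 hc with ⟨d, rfl, -⟩ | ⟨d, rfl, hd⟩
    · exact .inl ⟨u, d, by simp⟩
    · obtain rfl : d = [] := by
        cases d with
        | nil => rfl
        | cons x d => simp_all
      exact .inl ⟨u, [], by simp⟩
  · cases c with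
    | cons x c => exact .inr ⟨c, (List.cons.inj hc).2.symm⟩
    | nil =>
      obtain rfl : w = [] := by
        cases w with
        | nil => rfl
        | cons x w => simp_all
      exact .inl List.nil_infix

theorem hasDominatedFactor_append_cons_iff [Preorder α] (P : List α → Prop) {s t : List α} {M : α}
    (hs : ∀ x ∈ s, x < M) (ht : ∀ x ∈ t, x < M) :
    HasDominatedFactor P (s ++ M :: t) ↔ HasFactor P s ∨ HasDominatedFactor P t := by
  constructor
  · rintro ⟨w, v, hwv, hP, b, hb, hlt⟩
    have hM : M ∉ w := by
      intro hMw
      rcases List.mem_append.1 (hwv.subset (List.mem_append_right w hb)) with hbs | hbt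
      · exact lt_asymm (hlt M hMw) (hs b hbs)
      · rcases List.mem_cons.1 hbt with rfl | hbt
        · exact lt_irrefl b (hlt b hMw)
        · exact lt_asymm (hlt M hMw) (ht b hbt)
    rcases append_suffix_append_cons hM hwv with hw | hwv
    · exact .inl ⟨w, hw, hP⟩
    · exact .inr ⟨w, v, hwv, hP, b, hb, hlt⟩
  · rintro (⟨w, ⟨u, v, rfl⟩, hP⟩ | ⟨w, v, hwv, h⟩)
    · exact ⟨w, v ++ M :: t, ⟨u, by simp⟩, hP, M, by simp, fun a ha => hs a (by simp [ha])⟩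
    · exact ⟨w, v, (hwv.trans (List.suffix_cons M t)).trans (List.suffix_append s _), h⟩

theorem not_hasDominatedFactor_nil [LT α] (P : List α → Prop) : ¬ HasDominatedFactor P [] := by
  rintro ⟨w, v, hwv, -, b, hb, -⟩
  simpa using hwv.subset (List.mem_append_right w hb)

theorem hasDominatedFactor_isTriple_ofFn_iff [LT α] (T : α → α → α → Prop) {n : ℕ}
    (f : Fin n → α) :
    HasDominatedFactor (IsTriple T) (List.ofFn f) ↔
      ∃ (i j : ℕ) (hj : j < n) (hij : i + 3 ≤ j),
        T (f ⟨i, by omega⟩) (f ⟨i + 1, by omega⟩) (f ⟨i + 2, by omega⟩) ∧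
          f ⟨i, by omega⟩ < f ⟨j, hj⟩ ∧ f ⟨i + 1, by omega⟩ < f ⟨j, hj⟩ ∧
            f ⟨i + 2, by omega⟩ < f ⟨j, hj⟩ := by
  constructor
  · rintro ⟨_, v, ⟨u, hu⟩, ⟨x, y, z, rfl, hT⟩, b, hb, hlt⟩
    obtain ⟨k, hk, rfl⟩ := List.getElem_of_mem hb
    have hlen := congrArg List.length hu
    simp only [List.length_append, List.length_cons, List.length_nil, List.length_ofFn] at hlen
    have hf (i : ℕ) (hi : i < n) : f ⟨i, hi⟩ = (u ++ ([x, y, z] ++ v))[i]'(by simp; omega) := by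
      rw [List.getElem_of_eq hu, List.getElem_ofFn]
    refine ⟨u.length, u.length + (k + 3), by omega, by omega, ?_⟩
    simpa [hf, List.getElem_append_right] using And.intro hT hlt
  · rintro ⟨i, j, hj, hij, hT, hlt⟩
    refine ⟨_, (List.ofFn f).drop (i + 3), ⟨(List.ofFn f).take i, ?_⟩, ⟨_, _, _, rfl, hT⟩,
      f ⟨j, hj⟩, ?_, by simpa using hlt⟩
    · conv_rhs => rw [← List.take_append_drop i (List.ofFn f),
        List.drop_eq_getElem_cons (by simp; omega), List.drop_eq_getElem_cons (by simp; omega),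
        List.drop_eq_getElem_cons (by simp; omega)]
      simp
    · exact List.mem_iff_getElem.2 ⟨j - (i + 3), by simp; omega, by simp; congr; omega⟩

theorem areRevCompl_312_231 [LinearOrder α] :
    AreRevCompl (α := α) (IsTriple fun x y z => y < z ∧ z < x)
      (IsTriple fun x y z => z < x ∧ x < y) := by
  intro w f hf
  constructor
  · rintro ⟨z', y', x', hw, hxz, hzy⟩
    obtain ⟨x, y, z, rfl⟩ := List.length_eq_three.1
      (show w.length = 3 by simpa using congrArg List.length hw)
    obtain ⟨rfl, rfl, rfl⟩ : f z = z' ∧ f y = y' ∧ f x = x' := by simpa using hw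
    exact ⟨x, y, z, rfl, (hf.lt_iff_gt (by simp) (by simp)).1 hzy,
      (hf.lt_iff_gt (by simp) (by simp)).1 hxz⟩
  · rintro ⟨x, y, z, rfl, hyz, hzx⟩
    exact ⟨f z, f y, f x, rfl, hf (by simp) (by simp) hzx, hf (by simp) (by simp) hyz⟩

theorem avoidsA_iff {n : ℕ} (π : Equiv.Perm (Fin n)) :
    AvoidsA π ↔
      ¬ HasDominatedFactor (IsTriple fun x y z => y < z ∧ z < x) (List.ofFn π) := by
  rw [AvoidsA, hasDominatedFactor_isTriple_ofFn_iff, not_iff_not]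
  refine exists₄_congr fun i j hj hij => ⟨fun ⟨h₁, h₂, h₃⟩ => ?_, fun ⟨⟨h₁, h₂⟩, h₃, _⟩ => ?_⟩
  · exact ⟨⟨h₁, h₂⟩, h₃, (h₁.trans h₂).trans h₃, h₂.trans h₃⟩
  · exact ⟨h₁, h₂, h₃⟩

theorem avoidsB_iff {n : ℕ} (π : Equiv.Perm (Fin n)) :
    AvoidsB π ↔
      ¬ HasDominatedFactor (IsTriple fun x y z => z < x ∧ x < y) (List.ofFn π) := by
  rw [AvoidsB, hasDominatedFactor_isTriple_ofFn_iff, not_iff_not]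
  refine exists₄_congr fun i j hj hij => ⟨fun ⟨h₁, h₂, h₃⟩ => ?_, fun ⟨⟨h₁, h₂⟩, _, h₃, _⟩ => ?_⟩
  · exact ⟨⟨h₁, h₂⟩, h₂.trans h₃, h₃, (h₁.trans h₂).trans h₃⟩
  · exact ⟨h₁, h₂, h₃⟩

end Occurrences

section BlockReverseComplement

variable [LinearOrder α]

/-- The factorisation of a word after each of its right-to-left maxima `M`; each factor is
recorded as a pair `(s, M)`, standing for the word `s ++ [M]`. -/
def rlMaxBlocks : List α → List (List α × α)
  | [] => []
  | a :: l =>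
    match rlMaxBlocks l with
    | [] => [([], a)]
    | (s, M) :: bs => if a < M then (a :: s, M) :: bs else ([], a) :: (s, M) :: bs

theorem snd_mem_of_mem_rlMaxBlocks {l : List α} : ∀ b ∈ rlMaxBlocks l, b.2 ∈ l := by
  induction l with
  | nil => simp [rlMaxBlocks]
  | cons a l ih =>
    rw [rlMaxBlocks]
    split
    · simp
    · next s M bs h =>
      rw [h, List.forall_mem_cons] at ih
      split_ifs <;> grind

theorem rlMaxBlocks_append_cons {s t : List α} {M : α} (hs : ∀ x ∈ s, x < M)
    (ht : ∀ x ∈ t, x < M) : rlMaxBlocks (s ++ M :: t) = (s, M) :: rlMaxBlocks t := by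
  induction s with
  | nil =>
    rw [List.nil_append, rlMaxBlocks]
    split
    · simp_all
    · next s' M' bs h =>
      have hM' : M' < M := ht M' (snd_mem_of_mem_rlMaxBlocks (s', M') (by simp [h]))
      rw [if_neg hM'.not_gt, h]
  | cons a s ih =>
    obtain ⟨ha, hs⟩ := List.forall_mem_cons.1 hs
    rw [List.cons_append, rlMaxBlocks, ih hs]
    exact if_pos ha

/-- The bijection of the theorem: the reverse-complement is applied to each maximal block of
letters that are not right-to-left maxima. -/
noncomputable def blockRevCompl (l : List α) : List α :=
  (rlMaxBlocks l).flatMap fun b => revCompl b.1 ++ [b.2]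

theorem blockRevCompl_append_cons {s t : List α} {M : α} (hs : ∀ x ∈ s, x < M)
    (ht : ∀ x ∈ t, x < M) :
    blockRevCompl (s ++ M :: t) = revCompl s ++ M :: blockRevCompl t := by
  simp [blockRevCompl, rlMaxBlocks_append_cons hs ht]

theorem exists_eq_append_cons_of_nodup {l : List α} (hl : l.Nodup) (hne : l ≠ []) :
    ∃ s M t, l = s ++ M :: t ∧ (∀ x ∈ s, x < M) ∧ ∀ x ∈ t, x < M := by
  obtain ⟨s, t, hst⟩ := List.append_of_mem (List.max_mem hne)
  have hle : ∀ x ∈ l, x ≤ l.max hne := fun x hx => List.le_max_of_mem hx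
  generalize l.max hne = M at hst hle
  subst hst
  have hM : M ∉ s ++ t := (List.nodup_cons.1 (List.nodup_middle.1 hl)).1
  refine ⟨s, M, t, rfl, fun x hx => (hle x (by simp [hx])).lt_of_ne ?_,
    fun x hx => (hle x (by simp [hx])).lt_of_ne ?_⟩ <;> rintro rfl <;> simp_all

@[elab_as_elim]
theorem nodup_max_induction {motive : (l : List α) → l.Nodup → Prop} (nil : motive [] .nil)
    (append_cons : ∀ s M t (hl : (s ++ M :: t).Nodup) (_ : s.Nodup) (htn : t.Nodup),
      (∀ x ∈ s, x < M) → (∀ x ∈ t, x < M) → motive t htn → motive (s ++ M :: t) hl)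
    (l : List α) (hl : l.Nodup) : motive l hl := by
  induction hn : l.length using Nat.strong_induction_on generalizing l with
  | _ n ih =>
    rcases eq_or_ne l [] with rfl | hne
    · exact nil
    · obtain ⟨s, M, t, rfl, hs, ht⟩ := exists_eq_append_cons_of_nodup hl hne
      obtain ⟨hsn, hMtn, -⟩ := List.nodup_append.1 hl
      have htn : t.Nodup := hMtn.of_cons
      have hlen : t.length < n := by rw [← hn, List.length_append, List.length_cons]; omega
      exact append_cons s M t hl hsn htn hs ht (ih t.length hlen t htn rfl)

theorem blockRevCompl_perm {l : List α} (hl : l.Nodup) : (blockRevCompl l).Perm l := by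
  induction l, hl using nodup_max_induction with
  | nil => exact .nil
  | append_cons s M t _ hsn _ hs ht ih =>
    rw [blockRevCompl_append_cons hs ht]
    exact (revCompl_perm hsn).append (ih.cons M)

theorem forall_mem_revCompl_lt {s : List α} {M : α} (hsn : s.Nodup) (hs : ∀ x ∈ s, x < M) :
    ∀ x ∈ revCompl s, x < M :=
  fun x hx => hs x ((revCompl_perm hsn).subset hx)

theorem forall_mem_blockRevCompl_lt {t : List α} {M : α} (htn : t.Nodup)
    (ht : ∀ x ∈ t, x < M) : ∀ x ∈ blockRevCompl t, x < M :=
  fun x hx => ht x ((blockRevCompl_perm htn).subset hx)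

theorem blockRevCompl_blockRevCompl {l : List α} (hl : l.Nodup) :
    blockRevCompl (blockRevCompl l) = l := by
  induction l, hl using nodup_max_induction with
  | nil => rfl
  | append_cons s M t _ hsn htn hs ht ih =>
    rw [blockRevCompl_append_cons hs ht,
      blockRevCompl_append_cons (forall_mem_revCompl_lt hsn hs)
        (forall_mem_blockRevCompl_lt htn ht),
      revCompl_revCompl hsn, ih]

theorem listDes_blockRevCompl {l : List α} (hl : l.Nodup) :
    listDes (blockRevCompl l) = listDes l := by
  induction l, hl using nodup_max_induction with
  | nil => rfl
  | append_cons s M t _ hsn htn hs ht ih =>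
    have hrev : listDes (revCompl s) = listDes s :=
      listDes_reverse_map (strictAntiOn_revOn_toFinset s)
    rw [blockRevCompl_append_cons hs ht, listDes_append_cons, listDes_append_cons s,
      listDes_concat_of_lt (forall_mem_revCompl_lt hsn hs), listDes_concat_of_lt hs,
      listDes_cons_of_lt (forall_mem_blockRevCompl_lt htn ht), listDes_cons_of_lt ht,
      hrev, ih, (blockRevCompl_perm htn).length_eq]

theorem listInv_blockRevCompl {l : List α} (hl : l.Nodup) :
    listInv (blockRevCompl l) = listInv l := by
  induction l, hl using nodup_max_induction with
  | nil => rfl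
  | append_cons s M t _ hsn htn hs ht ih =>
    have hrev : listInv (revCompl s) = listInv s :=
      listInv_reverse_map (strictAntiOn_revOn_toFinset s)
    have hperm := blockRevCompl_perm htn
    have hcross : ((revCompl s).map fun a => (M :: blockRevCompl t).countP (· < a)).sum =
        (s.map fun a => (M :: t).countP (· < a)).sum := by
      simp only [(hperm.cons M).countP_eq, ((revCompl_perm hsn).map _).sum_eq]
    rw [blockRevCompl_append_cons hs ht, listInv_append, listInv_append, hrev, hcross,
      listInv, listInv, ih, hperm.countP_eq]

theorem hasDominatedFactor_blockRevCompl_iff {P Q : List α → Prop} (hPQ : AreRevCompl P Q)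
    {l : List α} (hl : l.Nodup) :
    HasDominatedFactor Q (blockRevCompl l) ↔ HasDominatedFactor P l := by
  induction l, hl using nodup_max_induction with
  | nil => exact iff_of_false (not_hasDominatedFactor_nil Q) (not_hasDominatedFactor_nil P)
  | append_cons s M t _ hsn htn hs ht ih =>
    have hrev : HasFactor Q (revCompl s) ↔ HasFactor P s :=
      hasFactor_reverse_map_iff hPQ (strictAntiOn_revOn_toFinset s)
    rw [blockRevCompl_append_cons hs ht,
      hasDominatedFactor_append_cons_iff Q (forall_mem_revCompl_lt hsn hs)
        (forall_mem_blockRevCompl_lt htn ht),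
      hasDominatedFactor_append_cons_iff P hs ht, hrev, ih]

end BlockReverseComplement

theorem exists_perm_ofFn_eq {n : ℕ} {l : List (Fin n)} (hl : l.Nodup) (hlen : l.length = n) :
    ∃ π : Equiv.Perm (Fin n), List.ofFn π = l := by
  have hinj : Function.Injective fun i : Fin n => l.get (i.cast hlen.symm) :=
    hl.injective_get.comp (Fin.cast_injective _)
  exact ⟨.ofBijective _ (Finite.injective_iff_bijective.1 hinj),
    List.ext_getElem (by simp [hlen]) fun i _ _ => by simp⟩

theorem exists_involutive_ofFn_eq_blockRevCompl (n : ℕ) :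
    ∃ Φ : Equiv.Perm (Fin n) → Equiv.Perm (Fin n), Function.Involutive Φ ∧
      ∀ π, List.ofFn (Φ π) = blockRevCompl (List.ofFn π) := by
  have hnodup (π : Equiv.Perm (Fin n)) : (List.ofFn π).Nodup := List.nodup_ofFn.2 π.injective
  have hexists (π : Equiv.Perm (Fin n)) :
      ∃ σ : Equiv.Perm (Fin n), List.ofFn σ = blockRevCompl (List.ofFn π) := by
    have hperm := blockRevCompl_perm (hnodup π)
    exact exists_perm_ofFn_eq (hperm.nodup_iff.2 (hnodup π)) (by simp [hperm.length_eq])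
  choose Φ hΦ using hexists
  refine ⟨Φ, fun π => DFunLike.coe_injective (List.ofFn_injective ?_), hΦ⟩
  rw [hΦ, hΦ, blockRevCompl_blockRevCompl (hnodup π)]

end PermPattern

open PermPattern in
theorem statement13_general {n : ℕ} {P Q : List (Fin n) → Prop} (hPQ : AreRevCompl P Q)
    (k m : ℕ) :
    Nat.card {π : Equiv.Perm (Fin n) //
        ¬ HasDominatedFactor P (List.ofFn π) ∧ des π = k ∧ inversions π = m} =
      Nat.card {π : Equiv.Perm (Fin n) //
        ¬ HasDominatedFactor Q (List.ofFn π) ∧ des π = k ∧ inversions π = m} := by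
  obtain ⟨Φ, hinvol, hΦ⟩ := exists_involutive_ofFn_eq_blockRevCompl n
  refine Nat.card_congr (hinvol.toPerm.subtypeEquiv fun π => ?_)
  have hnodup : (List.ofFn π).Nodup := List.nodup_ofFn.2 π.injective
  rw [hinvol.coe_toPerm, des_eq_listDes, des_eq_listDes, inversions_eq_listInv,
    inversions_eq_listInv, hΦ, listDes_blockRevCompl hnodup, listInv_blockRevCompl hnodup,
    hasDominatedFactor_blockRevCompl_iff hPQ hnodup]

/-- The joint distribution of descents and inversions agrees on avoiders of 3̲1̲2̲4 and
of 2̲3̲1̲4. -/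
theorem statement13 (n : ℕ) (hn : 1 ≤ n) (k m : ℕ) :
    Nat.card {π : Equiv.Perm (Fin n) // AvoidsA π ∧ des π = k ∧ inversions π = m} =
      Nat.card {π : Equiv.Perm (Fin n) // AvoidsB π ∧ des π = k ∧ inversions π = m} := by
  simpa only [PermPattern.avoidsA_iff, PermPattern.avoidsB_iff] using
    statement13_general PermPattern.areRevCompl_312_231 k m
end

section
/- Let A_0(t) = 1 and, for n ≥ 1, A_n(t) = ∑_{π ∈ S_n(1̲2̲3)} t^{des(π)+1}, where S_n(1̲2̲3) is the set of permutations of length n with no index i such that π_i < π_{i+1} < π_{i+2}. Define polynomials v_n(t) by v_0 = 1, v_1 = −t, and v_n = −t·v_{n−1} − t·v_{n−2} for n ≥ 2 (so that (1 + tx + tx²)·∑_{n≥0} v_n xⁿ = 1). Then for every n ≥ 1, ∑_{i=0}^{n} binom(n,i)·v_i(t)·A_{n−i}(t) = 0; equivalently, (∑_{n≥0} v_n(t)·xⁿ/n!)·(∑_{n≥0} A_n(t)·xⁿ/n!) = 1 as formal power series in x over ℤ[t]. -/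
open scoped Classical

/-- `π` avoids the consecutive pattern 1̲2̲3: there is no (0-indexed) position `i` with
`i + 2 < n` such that `π_i < π_{i+1} < π_{i+2}`. -/
def AvoidsC123 {n : ℕ} (π : Equiv.Perm (Fin n)) : Prop :=
  ¬ ∃ (i : ℕ) (h : i + 2 < n),
      π ⟨i, by omega⟩ < π ⟨i + 1, by omega⟩ ∧ π ⟨i + 1, by omega⟩ < π ⟨i + 2, h⟩

/-- `A_0(t) = 1` and, for `n ≥ 1`, `A_n(t) = ∑_{π ∈ S_n(1̲2̲3)} t^{des(π)+1}`. -/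
noncomputable def A : ℕ → Polynomial ℚ := fun n =>
  if n = 0 then 1 else
    ∑ π ∈ Finset.univ.filter (fun π : Equiv.Perm (Fin n) => AvoidsC123 π),
      Polynomial.X ^ (des π + 1)

/-- `v_0 = 1`, `v_1 = −t`, and `v_n = −t·v_{n−1} − t·v_{n−2}` for `n ≥ 2`
(so that `(1 + tx + tx²)·∑_{n≥0} v_n xⁿ = 1`). -/
noncomputable def v : ℕ → Polynomial ℚ
  | 0 => 1
  | 1 => -Polynomial.X
  | n + 2 => -Polynomial.X * v (n + 1) - Polynomial.X * v n

/-! Read from the left, a permutation splits into maximal ascending runs; with weight `1` for the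
empty run, `t` for runs of length one or two, and `0` for longer ones, the product of the weights
of the runs of `π` is `t ^ (des π + 1)` if `π` avoids `1̲2̲3`, and `0` otherwise. The generating
function `1 + t x + t x²` of these weights has the inverse `∑ vₙ xⁿ`, so the theorem is a case of
Gessel's run theorem. For the latter, `n.choose m` times the weighted count of permutations of
length `m` is the weighted count of the prefixes of length `m` of those permutations of length `n`
that ascend after the prefix. Fix a permutation `σ` of length `n` whose last run starts at position
`s`: it ascends after the prefix of length `m` exactly when `s ≤ m`, and this prefix then consists
of the runs of `σ` before `s` and of a run of length `m - s`. So `σ` contributes the weight of its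
prefix of length `s` times a coefficient of positive degree of
`(1 + t x + t x²) * ∑ vₙ xⁿ = 1`. -/

section RunWeight

open Finset

/-- The set of ascents of a word `f`: the (0-indexed) positions `i` with `f i < f (i + 1)`. -/
def ascents {α : Type*} [LT α] {n : ℕ} (f : Fin n → α) : Set ℕ :=
  {i | ∃ h : i + 1 < n, f ⟨i, by omega⟩ < f ⟨i + 1, h⟩}

/-- The first position of the ascending run containing position `i`, in a word with set of
ascents `S`. -/
noncomputable def runStart (S : Set ℕ) : ℕ → ℕ
  | 0 => 0
  | i + 1 => if i ∈ S then runStart S i else i + 1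

variable {S : Set ℕ}

lemma runStart_le (S : Set ℕ) (i : ℕ) : runStart S i ≤ i := by
  induction i with
  | zero => rfl
  | succ i ih =>
    rw [runStart]
    split_ifs
    exacts [ih.trans i.le_succ, le_rfl]

lemma runStart_le_iff {i m : ℕ} : runStart S i ≤ m ↔ ∀ j, m ≤ j → j < i → j ∈ S := by
  induction i with
  | zero => simp [runStart]
  | succ i ih =>
    rw [runStart]
    split_ifs with hi
    · rw [ih]
      refine forall₂_congr fun j _ => ⟨fun h hj => ?_, fun h hj => h (by omega)⟩
      rcases Nat.lt_succ_iff_lt_or_eq.mp hj with hj | rfl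
      exacts [h hj, hi]
    · refine ⟨fun h j _ _ => by omega, fun h => ?_⟩
      by_contra! hm
      exact hi (h i (by omega) i.lt_succ_self)

lemma runStart_eq_of_le {i j : ℕ} (hij : runStart S i ≤ j) (hji : j ≤ i) :
    runStart S j = runStart S i := by
  induction i with
  | zero => rw [Nat.le_zero.mp hji]
  | succ i ih =>
    rcases hji.eq_or_lt with rfl | hji
    · rfl
    · rw [runStart] at hij ⊢
      split_ifs at hij ⊢
      · exact ih hij (by omega)
      · omega

variable {R : Type*} [Semiring R]

/-- The product of the weights `w ℓ`, over the lengths `ℓ` of the ascending runs, for the prefix of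
length `m` of a word with set of ascents `S`. -/
noncomputable def runWeight (w : ℕ → R) (S : Set ℕ) : ℕ → R
  | 0 => 1
  | i + 1 => runWeight w S (runStart S i) * w (i + 1 - runStart S i)
decreasing_by exact Nat.lt_succ_of_le (runStart_le S i)

lemma runStart_congr {T : Set ℕ} {i : ℕ} (h : ∀ j < i, j ∈ S ↔ j ∈ T) :
    runStart S i = runStart T i := by
  induction i with
  | zero => rfl
  | succ i ih =>
    simp only [runStart, h i i.lt_succ_self, ih fun j hj => h j (hj.trans i.lt_succ_self)]

lemma runWeight_congr (w : ℕ → R) {T : Set ℕ} {m : ℕ} (h : ∀ j, j + 1 < m → (j ∈ S ↔ j ∈ T)) :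
    runWeight w S m = runWeight w T m := by
  induction m using Nat.strong_induction_on with
  | _ m ih =>
    cases m with
    | zero => simp only [runWeight]
    | succ i =>
      have hs : runStart S i = runStart T i := runStart_congr fun j hj => h j (by omega)
      have hsi := runStart_le T i
      rw [runWeight, runWeight, hs, ih _ (by omega) fun j hj => h j (by omega)]

lemma runWeight_runStart_add {w : ℕ → R} (h₀ : w 0 = 1) {n k : ℕ} (hk : runStart S n + k ≤ n + 1) :
    runWeight w S (runStart S n + k) = runWeight w S (runStart S n) * w k := by
  cases k with
  | zero => rw [h₀, mul_one, add_zero]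
  | succ k =>
    have hs : runStart S (runStart S n + k) = runStart S n :=
      runStart_eq_of_le (Nat.le_add_right _ _) (by omega)
    rw [← add_assoc, runWeight, hs, add_assoc, Nat.add_sub_cancel_left]

lemma runWeight_of_notMem (w : ℕ → R) {n : ℕ} (hn : n ∉ S) :
    runWeight w S (n + 2) = runWeight w S (n + 1) * w 1 := by
  rw [runWeight, runStart, if_neg hn, Nat.add_sub_cancel_left]

lemma runWeight_of_notMem_of_mem (w : ℕ → R) {n : ℕ} (h₀ : n ∉ S) (h₁ : n + 1 ∈ S) :
    runWeight w S (n + 3) = runWeight w S (n + 1) * w 2 := by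
  rw [runWeight, runStart, if_pos h₁, runStart, if_neg h₀, Nat.add_sub_cancel_left (m := 2)]

lemma sum_runWeight_mul_eq_zero {w u : ℕ → R} (h₀ : w 0 = 1)
    (hu : ∀ n, ∑ p ∈ antidiagonal (n + 1), w p.1 * u p.2 = 0) (S : Set ℕ) (n : ℕ) :
    ∑ p ∈ antidiagonal (n + 1) with runStart S n ≤ p.1, runWeight w S p.1 * u p.2 = 0 := by
  have hs := runStart_le S n
  calc ∑ p ∈ antidiagonal (n + 1) with runStart S n ≤ p.1, runWeight w S p.1 * u p.2
    _ = ∑ p ∈ antidiagonal (n + 1 - runStart S n),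
          runWeight w S (runStart S n + p.1) * u p.2 := by
      rw [Nat.antidiagonal_filter_le_fst_of_le (hs.trans n.le_succ), sum_map]
      simp [add_comm]
    _ = ∑ p ∈ antidiagonal (n + 1 - runStart S n),
          runWeight w S (runStart S n) * (w p.1 * u p.2) := by
      refine sum_congr rfl fun p hp => ?_
      rw [HasAntidiagonal.mem_antidiagonal] at hp
      rw [runWeight_runStart_add h₀ (by omega), mul_assoc]
    _ = 0 := by rw [← mul_sum, Nat.succ_sub hs, hu, mul_zero]

end RunWeight

section Prefix

open Finset Equiv

variable {m k : ℕ}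

lemma card_compl_of_card_eq {T : Finset (Fin (m + k))} (hT : #T = m) : #Tᶜ = k := by
  rw [card_compl, hT, Fintype.card_fin, Nat.add_sub_cancel_left]

/-- The permutation of length `m + k` whose first `m` letters are those of `T`, in the relative
order given by `π`, and whose last `k` letters are in increasing order. -/
def permOfPrefix (T : {T : Finset (Fin (m + k)) // #T = m}) (π : Perm (Fin m)) :
    Perm (Fin (m + k)) :=
  (finSumFinEquiv.symm.trans (π.sumCongr (Equiv.refl _))).trans
    (finSumEquivOfFinset T.2 (card_compl_of_card_eq T.2))

@[simp]
lemma permOfPrefix_castAdd (T : {T : Finset (Fin (m + k)) // #T = m}) (π : Perm (Fin m))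
    (i : Fin m) : permOfPrefix T π (Fin.castAdd k i) = T.1.orderEmbOfFin T.2 (π i) := by
  simp [permOfPrefix]

@[simp]
lemma permOfPrefix_natAdd (T : {T : Finset (Fin (m + k)) // #T = m}) (π : Perm (Fin m))
    (j : Fin k) : permOfPrefix T π (Fin.natAdd m j) =
      (T.1ᶜ).orderEmbOfFin (card_compl_of_card_eq T.2) j := by
  simp [permOfPrefix]

lemma image_permOfPrefix_castAdd (T : {T : Finset (Fin (m + k)) // #T = m}) (π : Perm (Fin m)) :
    univ.image (fun i => permOfPrefix T π (Fin.castAdd k i)) = T.1 := by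
  calc univ.image (fun i => permOfPrefix T π (Fin.castAdd k i))
    _ = (univ.image π).image (T.1.orderEmbOfFin T.2) := by
      simp only [permOfPrefix_castAdd, image_image, Function.comp_def]
    _ = T.1 := by rw [image_univ_equiv, image_orderEmbOfFin_univ]

lemma permOfPrefix_injective : Function.Injective fun p :
    {T : Finset (Fin (m + k)) // #T = m} × Perm (Fin m) => permOfPrefix p.1 p.2 := by
  rintro ⟨T, π⟩ ⟨T', π'⟩ (h : permOfPrefix T π = permOfPrefix T' π')
  obtain rfl : T = T' := Subtype.ext <| by
    rw [← image_permOfPrefix_castAdd T π, h, image_permOfPrefix_castAdd]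
  have hπ : π = π' := Equiv.ext fun i => (T.1.orderEmbOfFin T.2).injective <| by
    rw [← permOfPrefix_castAdd, h, permOfPrefix_castAdd]
  rw [hπ]

lemma exists_orderEmbOfFin_comp_perm {α : Type*} [LinearOrder α] {s : Finset α} (hs : #s = m)
    {f : Fin m → α} (hf : Function.Injective f) (hfs : ∀ i, f i ∈ s) :
    ∃ π : Perm (Fin m), ∀ i, f i = s.orderEmbOfFin hs (π i) := by
  have hsort : f ∘ Tuple.sort f = s.orderEmbOfFin hs :=
    orderEmbOfFin_unique hs (fun i => hfs _) <|
      (Tuple.monotone_sort f).strictMono_of_injective (hf.comp (Tuple.sort f).injective)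
  exact ⟨(Tuple.sort f).symm, fun i => by simp [← hsort]⟩

lemma exists_permOfPrefix_eq {σ : Perm (Fin (m + k))}
    (hσ : StrictMono fun j : Fin k => σ (Fin.natAdd m j)) : ∃ T π, permOfPrefix T π = σ := by
  have hinj : Function.Injective fun i : Fin m => σ (Fin.castAdd k i) :=
    σ.injective.comp (Fin.castAdd_injective m k)
  let T : Finset (Fin (m + k)) := univ.image fun i : Fin m => σ (Fin.castAdd k i)
  have hT : #T = m := by rw [card_image_of_injective _ hinj, card_fin]
  obtain ⟨π, hπ⟩ := exists_orderEmbOfFin_comp_perm hT hinj fun i => mem_image_of_mem _ (mem_univ i)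
  have hmem (j : Fin k) : σ (Fin.natAdd m j) ∈ Tᶜ := by
    simp only [T, mem_compl, mem_image, mem_univ, true_and, σ.injective.eq_iff, Fin.ext_iff,
      Fin.val_castAdd, Fin.val_natAdd]
    omega
  have htail : (fun j : Fin k => σ (Fin.natAdd m j)) =
      Tᶜ.orderEmbOfFin (card_compl_of_card_eq hT) :=
    orderEmbOfFin_unique _ hmem hσ
  refine ⟨⟨T, hT⟩, π, Equiv.ext fun x => ?_⟩
  induction x using Fin.addCases with
  | left i => rw [permOfPrefix_castAdd, hπ]
  | right j => rw [permOfPrefix_natAdd, ← htail]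

lemma strictMono_permOfPrefix_natAdd (T : {T : Finset (Fin (m + k)) // #T = m})
    (π : Perm (Fin m)) : StrictMono fun j : Fin k => permOfPrefix T π (Fin.natAdd m j) := by
  simpa only [permOfPrefix_natAdd] using OrderEmbedding.strictMono _

lemma mem_ascents_permOfPrefix (T : {T : Finset (Fin (m + k)) // #T = m}) (π : Perm (Fin m))
    {i : ℕ} (hi : i + 1 < m) : i ∈ ascents (permOfPrefix T π) ↔ i ∈ ascents π := by
  have hval (j : ℕ) (hj : j < m) :
      permOfPrefix T π ⟨j, by omega⟩ = T.1.orderEmbOfFin T.2 (π ⟨j, hj⟩) :=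
    permOfPrefix_castAdd T π ⟨j, hj⟩
  simp [ascents, hi, show i + 1 < m + k by omega, hval i (by omega), hval (i + 1) hi]

lemma strictMono_natAdd_iff_runStart_le {α : Type*} [Preorder α] (f : Fin (m + k) → α) :
    StrictMono (fun j : Fin k => f (Fin.natAdd m j)) ↔
      runStart (ascents f) (m + k - 1) ≤ m := by
  rw [runStart_le_iff]
  cases k with
  | zero => exact ⟨fun _ j _ _ => by omega, fun _ j => j.elim0⟩
  | succ k =>
    rw [Fin.strictMono_iff_lt_succ]
    constructor
    · intro h j hmj hj
      obtain ⟨j, rfl⟩ := Nat.exists_eq_add_of_le hmj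
      exact ⟨by omega, h ⟨j, by omega⟩⟩
    · intro h j
      obtain ⟨_, hj⟩ := h (m + j) (by omega) (by omega)
      exact hj

end Prefix

section RunTheorem

open Finset Equiv

variable {R : Type*} [Semiring R]

/-- The enumerator of the permutations of length `n` by the lengths of their ascending runs, a run
of length `ℓ` having weight `w ℓ`. -/
noncomputable def runSum (w : ℕ → R) (n : ℕ) : R :=
  ∑ π : Perm (Fin n), runWeight w (ascents π) n

lemma choose_nsmul_runSum (w : ℕ → R) (m k : ℕ) :
    (m + k).choose m • runSum w m =
      ∑ σ ∈ {σ : Perm (Fin (m + k)) | runStart (ascents σ) (m + k - 1) ≤ m},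
        runWeight w (ascents σ) m := by
  calc (m + k).choose m • runSum w m
    _ = ∑ p : {T : Finset (Fin (m + k)) // #T = m} × Perm (Fin m),
          runWeight w (ascents p.2) m := by
      simp [Fintype.sum_prod_type, runSum]
    _ = ∑ σ ∈ {σ : Perm (Fin (m + k)) | runStart (ascents σ) (m + k - 1) ≤ m},
          runWeight w (ascents σ) m := by
      simp only [← strictMono_natAdd_iff_runStart_le]
      refine sum_nbij (fun p => permOfPrefix p.1 p.2) ?_ permOfPrefix_injective.injOn ?_ ?_
      · exact fun p _ => by simpa using strictMono_permOfPrefix_natAdd p.1 p.2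
      · intro σ hσ
        obtain ⟨T, π, h⟩ := exists_permOfPrefix_eq (mem_filter.mp hσ).2
        exact ⟨(T, π), mem_univ _, h⟩
      · exact fun p _ => runWeight_congr w fun i hi => (mem_ascents_permOfPrefix p.1 p.2 hi).symm

/-- **Gessel's run theorem**, in terms of the coefficients of exponential generating functions. -/
theorem sum_choose_nsmul_runSum_mul {w u : ℕ → R} (h₀ : w 0 = 1)
    (hu : ∀ n, ∑ p ∈ antidiagonal (n + 1), w p.1 * u p.2 = 0) (n : ℕ) :
    ∑ p ∈ antidiagonal (n + 1), (n + 1).choose p.1 • runSum w p.1 * u p.2 = 0 := by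
  have hprefix : ∀ p ∈ antidiagonal (n + 1), (n + 1).choose p.1 • runSum w p.1 =
      ∑ σ ∈ {σ : Perm (Fin (n + 1)) | runStart (ascents σ) n ≤ p.1},
        runWeight w (ascents σ) p.1 := by
    rintro ⟨m, k⟩ hmk
    have hmk : m + k = n + 1 := HasAntidiagonal.mem_antidiagonal.mp hmk
    have := choose_nsmul_runSum w m k
    rwa [hmk] at this
  calc ∑ p ∈ antidiagonal (n + 1), (n + 1).choose p.1 • runSum w p.1 * u p.2
    _ = ∑ p ∈ antidiagonal (n + 1), ∑ σ ∈ {σ : Perm (Fin (n + 1)) | runStart (ascents σ) n ≤ p.1},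
          runWeight w (ascents σ) p.1 * u p.2 :=
      sum_congr rfl fun p hp => by rw [hprefix p hp, sum_mul]
    _ = ∑ σ : Perm (Fin (n + 1)), ∑ p ∈ antidiagonal (n + 1) with runStart (ascents σ) n ≤ p.1,
          runWeight w (ascents σ) p.1 * u p.2 := by
      simp only [sum_filter]
      exact sum_comm
    _ = 0 := sum_eq_zero fun σ _ => sum_runWeight_mul_eq_zero h₀ hu (ascents σ) n

end RunTheorem

section ShortRuns

open Finset Polynomial

/-- The run weights for permutations avoiding `1̲2̲3`: the coefficients of `1 + t x + t x²` as a
polynomial in `x`. -/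
noncomputable def shortRunWeight (R : Type*) [Semiring R] : ℕ → R[X]
  | 0 => 1
  | 1 => X
  | 2 => X
  | _ + 3 => 0

lemma sum_shortRunWeight_mul_v (n : ℕ) :
    ∑ p ∈ antidiagonal (n + 1), shortRunWeight ℚ p.1 * v p.2 = 0 := by
  rcases n with _ | _ | n <;> simp [Nat.sum_antidiagonal_succ, shortRunWeight, v]

lemma runWeight_shortRunWeight_eq_zero (R : Type*) [Semiring R] {S : Set ℕ} {n : ℕ} (h₀ : n ∈ S)
    (h₁ : n + 1 ∈ S) : runWeight (shortRunWeight R) S (n + 3) = 0 := by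
  have hs : runStart S (n + 2) = runStart S n := by simp only [runStart, h₀, h₁, if_true]
  rw [runWeight, hs, Nat.sub_add_comm (m := 3) (runStart_le S n), shortRunWeight, mul_zero]

lemma exists_consecutive_mem_succ_iff {S : Set ℕ} {n : ℕ}
    (h : ∀ i, i + 1 = n → i ∈ S → n ∉ S) :
    (∃ i, i + 1 < n + 1 ∧ i ∈ S ∧ i + 1 ∈ S) ↔ ∃ i, i + 1 < n ∧ i ∈ S ∧ i + 1 ∈ S := by
  refine exists_congr fun i => and_congr_left fun ⟨h₀, h₁⟩ => ?_
  have : i + 1 ≠ n := fun hi => h i hi h₀ (hi ▸ h₁)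
  omega

lemma runWeight_shortRunWeight (R : Type*) [Semiring R] (S : Set ℕ) (n : ℕ) :
    runWeight (shortRunWeight R) S (n + 1) =
      if ∃ i, i + 1 < n ∧ i ∈ S ∧ i + 1 ∈ S then 0 else X ^ (#{i ∈ range n | i ∉ S} + 1) := by
  induction n with
  | zero => simp [runWeight, runStart, shortRunWeight]
  | succ n ih =>
    rw [range_add_one, filter_insert]
    by_cases hn : n ∈ S
    · rw [if_neg (not_not.mpr hn)]
      cases n with
      | zero => simp [runWeight, runStart, shortRunWeight, hn]
      | succ n =>
        by_cases hn' : n ∈ S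
        · rw [runWeight_shortRunWeight_eq_zero R hn' hn, if_pos ⟨n, by omega, hn', hn⟩]
        · have hlen : shortRunWeight R 2 = shortRunWeight R 1 := rfl
          rw [runWeight_of_notMem_of_mem _ hn' hn, hlen, ← runWeight_of_notMem _ hn', ih]
          simp only [exists_consecutive_mem_succ_iff (n := n + 1)
            fun _ hi h => absurd (Nat.succ_injective hi ▸ h) hn']
    · rw [runWeight_of_notMem _ hn, ih, if_pos hn, card_insert_of_notMem (by simp)]
      simp only [exists_consecutive_mem_succ_iff fun _ _ _ => hn, shortRunWeight, ite_mul,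
        zero_mul, pow_succ]

lemma avoidsC123_iff_ascents {n : ℕ} (π : Equiv.Perm (Fin (n + 1))) :
    AvoidsC123 π ↔ ¬ ∃ i, i + 1 < n ∧ i ∈ ascents π ∧ i + 1 ∈ ascents π := by
  refine not_congr (exists_congr fun i => ⟨?_, ?_⟩)
  · rintro ⟨h, h₁, h₂⟩
    exact ⟨by omega, ⟨by omega, h₁⟩, ⟨h, h₂⟩⟩
  · rintro ⟨-, ⟨_, h₁⟩, ⟨h, h₂⟩⟩
    exact ⟨h, h₁, h₂⟩

lemma des_eq_card_notMem_ascents {n : ℕ} (π : Equiv.Perm (Fin (n + 1))) :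
    des π = #{i ∈ range n | i ∉ ascents π} := by
  rw [des, ← card_map Fin.valEmbedding]
  congr 1
  ext i
  simp only [mem_map, mem_filter, mem_univ, true_and, mem_range, ascents, Set.mem_ofPred_eq,
    not_exists, not_lt, Fin.valEmbedding_apply]
  constructor
  · rintro ⟨i, ⟨hi, hlt⟩, rfl⟩
    exact ⟨by omega, fun _ => hlt.le⟩
  · rintro ⟨hi, hle⟩
    have hi' : i + 1 < n + 1 := Nat.succ_lt_succ hi
    exact ⟨⟨i, by omega⟩, ⟨hi', (hle hi').lt_of_ne (π.injective.ne (by simp))⟩, rfl⟩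

lemma A_eq_runSum (n : ℕ) : A n = runSum (shortRunWeight ℚ) n := by
  cases n with
  | zero => simp [A, runSum, runWeight]
  | succ n =>
    rw [A, if_neg n.succ_ne_zero, runSum, sum_filter]
    refine sum_congr rfl fun π _ => ?_
    simp only [runWeight_shortRunWeight, des_eq_card_notMem_ascents, avoidsC123_iff_ascents,
      ite_not]

end ShortRuns

/-- For every `n ≥ 1`, `∑_{i=0}^{n} C(n,i)·v_i(t)·A_{n−i}(t) = 0`; equivalently
`(∑ v_n(t)·xⁿ/n!)·(∑ A_n(t)·xⁿ/n!) = 1` as formal power series in `x`. -/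
theorem statement18 (n : ℕ) (hn : 1 ≤ n) :
    ∑ i ∈ Finset.range (n + 1), (n.choose i : Polynomial ℚ) * v i * A (n - i) = 0 := by
  obtain ⟨n, rfl⟩ := Nat.exists_eq_add_of_le' hn
  have hrun := sum_choose_nsmul_runSum_mul rfl sum_shortRunWeight_mul_v n
  rw [← Finset.Nat.sum_antidiagonal_eq_sum_range_succ
    (fun i j => ((n + 1).choose i : Polynomial ℚ) * v i * A j), ← Finset.Nat.sum_antidiagonal_swap,
    ← hrun]
  refine Finset.sum_congr rfl fun p hp => ?_
  rw [A_eq_runSum, nsmul_eq_mul, Prod.fst_swap, Prod.snd_swap, mul_right_comm,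
    ← Nat.choose_symm_of_eq_add (Finset.HasAntidiagonal.mem_antidiagonal.mp hp).symm]
end
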